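/- arXiv:1310.6056 — 2 statements merged into one kernel-verified Lean document; each statement's English description precedes it below -/
import Mathlib

section
/- Let n be an even positive integer, A an n×n positive-definite symmetric integer matrix with even diagonal entries, D = (−1)^{n/2} det(A), N the level of A (the smallest positive integer with N·A^{−1} an even integer matrix), P a spherical function of degree ν with respect to A, and h ∈ ℤⁿ a column vector with Ah ≡ 0 (mod N). Define θ(τ; h, A, N, P) = ∑_{x ∈ ℤⁿ, x ≡ h (mod N)} P(x) e^{2πi (ᵗx A x) τ / (2N²)} for τ in the upper half-plane. Then for every γ = (a b; c d) ∈ Γ₀(N) one has θ(γτ; h, A, N, P) = (D/d) · e^{2πi a b (ᵗh A h) / (2N²)} · (cτ + d)^{n/2 + ν} · θ(τ; a·h, A, N, P). -/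
open Matrix UpperHalfPlane Complex CongruenceSubgroup
open scoped MatrixGroups

/-- The factor of the Kronecker symbol `(a/b)` at the prime `2`. -/
def kronTwo (a : ℤ) : ℤ :=
  if 2 ∣ a then 0 else if a % 8 = 1 ∨ a % 8 = 7 then 1 else -1

/-- The Kronecker symbol `(a/b)`: completely multiplicative in `b`, with
`(a / 0) = 1` iff `a = ±1`, a sign factor at `-1`, `kronTwo` at `2`, and the Jacobi
(= product of Legendre) symbol on the odd part of `b`. -/
noncomputable def kronecker (a b : ℤ) : ℤ :=
  if b = 0 then (if a = 1 ∨ a = -1 then 1 else 0)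
  else
    (if b < 0 ∧ a < 0 then -1 else 1) *
      kronTwo a ^ padicValNat 2 b.natAbs *
      jacobiSym a (b.natAbs / 2 ^ padicValNat 2 b.natAbs)

/-- The linear form `x ↦ ᵗl A x`. -/
noncomputable def sphericalLin {n : ℕ} (A : Matrix (Fin n) (Fin n) ℤ) (l : Fin n → ℂ)
    (x : Fin n → ℤ) : ℂ :=
  ∑ i, ∑ j, l i * (A i j : ℂ) * (x j : ℂ)

/-- A spherical function of degree `ν` with respect to `A`: a constant if `ν = 0`;
`x ↦ ᵗl A x` with `l ∈ ℂⁿ` if `ν = 1`; a finite linear combination of `x ↦ (ᵗl A x)^ν`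
with `ᵗl A l = 0` if `ν > 1`. -/
def IsSpherical {n : ℕ} (A : Matrix (Fin n) (Fin n) ℤ) (ν : ℕ) (P : (Fin n → ℤ) → ℂ) : Prop :=
  (ν = 0 ∧ ∃ c : ℂ, P = fun _ => c) ∨
  (ν = 1 ∧ ∃ l : Fin n → ℂ, P = fun x => sphericalLin A l x) ∨
  (1 < ν ∧ ∃ (k : ℕ) (c : Fin k → ℂ) (l : Fin k → Fin n → ℂ),
      (∀ t, ∑ i, ∑ j, l t i * (A i j : ℂ) * l t j = 0) ∧
      P = fun x => ∑ t, c t * sphericalLin A (l t) x ^ ν)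

open MeasureTheory

theorem summable_exp_neg_abs_int : Summable fun m : ℤ => Real.exp (-|(m : ℝ)|) := by
  have key : Summable fun m : ℕ => Real.exp (-(m : ℝ)) := Real.summable_exp_neg_nat
  refine Summable.of_nat_of_neg ?_ ?_
  · simpa using key
  · simpa using key

theorem summable_exp_neg_sum_abs (n : ℕ) :
    Summable fun m : Fin n → ℤ => Real.exp (-∑ i, |(m i : ℝ)|) := by
  induction n with
  | zero => exact Summable.of_finite
  | succ n ih =>
    rw [← (Fin.consEquiv fun _ : Fin (n + 1) => ℤ).summable_iff]
    have := summable_exp_neg_abs_int.mul_of_nonneg ih (fun _ => (Real.exp_pos _).le)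
      (fun _ => (Real.exp_pos _).le)
    refine this.congr fun p => ?_
    simp [Fin.consEquiv, Fin.sum_univ_succ, Real.exp_add, add_comm]

theorem integrable_exp_neg_sum_abs (n : ℕ) :
    Integrable fun v : Fin n → ℝ => Real.exp (-∑ i, |v i|) := by
  have h1 : Integrable fun x : ℝ => Real.exp (-|x|) := by
    rw [← integrableOn_univ, ← Set.Iic_union_Ioi (a := (0 : ℝ))]
    refine IntegrableOn.union ?_ ?_
    · exact (integrableOn_exp_Iic 0).congr_fun
        (fun x hx => by simp [abs_of_nonpos (Set.mem_Iic.mp hx)]) measurableSet_Iic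
    · exact (integrableOn_exp_neg_Ioi 0).congr_fun
        (fun x hx => by simp [abs_of_pos (Set.mem_Ioi.mp hx)]) measurableSet_Ioi
  have := Integrable.fintype_prod (ι := Fin n) (f := fun _ : Fin n => fun x : ℝ => Real.exp (-|x|))
    (μ := fun _ => volume) (fun _ => h1)
  refine this.congr (Filter.Eventually.of_forall fun v => ?_)
  simp only [← Real.exp_sum, Finset.sum_neg_distrib]

/-- The half-open unit cube `(0, 1]ⁿ`. -/
def unitCube (n : ℕ) : Set (Fin n → ℝ) := {x | ∀ i, x i ∈ Set.Ioc (0 : ℝ) (0 + 1)}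

theorem measurableSet_unitCube (n : ℕ) : MeasurableSet (unitCube n) :=
  MeasurableSet.univ_pi' fun _ => measurableSet_Ioc

/-- The real vector `x + m` for an integral vector `m`. -/
def addInt {n : ℕ} (x : Fin n → ℝ) (m : Fin n → ℤ) : Fin n → ℝ := fun i => x i + m i

theorem hasSum_integral_unitCube {n : ℕ} {E : Type*} [NormedAddCommGroup E] [NormedSpace ℝ E]
    {g : (Fin n → ℝ) → E} (hg : Integrable g) :
    HasSum (fun m : Fin n → ℤ => ∫ x in unitCube n, g (addInt x m)) (∫ x, g x) := by
  let s : (Fin n → ℤ) → Set (Fin n → ℝ) := fun m => (fun x => x - fun i => (m i : ℝ)) ⁻¹' unitCube n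
  have hmp : ∀ m : Fin n → ℤ, MeasurePreserving (fun x : Fin n → ℝ => x - fun i => (m i : ℝ)) :=
    fun m => measurePreserving_sub_right volume _
  have hs : ∀ m, MeasurableSet (s m) := fun m =>
    (hmp m).measurable (measurableSet_unitCube n)
  have hmem : ∀ m x, x ∈ s m ↔ ∀ i, ⌈x i⌉ - 1 = m i := by
    intro m x
    refine forall_congr' fun i => ?_
    have : ⌈x i⌉ - 1 = m i ↔ ⌈x i⌉ = m i + 1 := by omega
    rw [this, Int.ceil_eq_iff]
    simp only [Pi.sub_apply, Set.mem_Ioc]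
    push_cast
    constructor <;> rintro ⟨h1, h2⟩ <;> constructor <;> linarith
  have hd : Pairwise (Function.onFun Disjoint s) := by
    intro m m' hne
    refine Set.disjoint_left.mpr fun x hx hx' => hne (funext fun i => ?_)
    rw [← (hmem m x).mp hx i, (hmem m' x).mp hx' i]
  have hU : ⋃ m, s m = Set.univ := by
    refine Set.eq_univ_of_forall fun x => Set.mem_iUnion.mpr ⟨fun i => ⌈x i⌉ - 1, ?_⟩
    exact (hmem _ x).mpr fun i => rfl
  have := hasSum_integral_iUnion hs hd (f := g) (μ := volume) (by rw [hU]; exact hg.integrableOn)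
  rw [hU, setIntegral_univ] at this
  convert! this using 2 with m
  have he : MeasurableEmbedding (fun x : Fin n → ℝ => x - fun i => (m i : ℝ)) :=
    (Homeomorph.subRight _).measurableEmbedding
  rw [← (hmp m).setIntegral_preimage_emb he (fun x => g (addInt x m)) (unitCube n)]
  refine setIntegral_congr_fun (hs m) fun x _ => ?_
  congr 1
  ext i
  simp [addInt]

section Poisson

variable {n : ℕ} {f : (Fin n → ℝ) → ℂ} {C : ℝ}

theorem norm_addInt_le (hC : ∀ v, ‖f v‖ ≤ C * Real.exp (-∑ i, |v i|)) (x : Fin n → ℝ)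
    (m : Fin n → ℤ) :
    ‖f (addInt x m)‖ ≤ C * Real.exp (∑ i, |x i|) * Real.exp (-∑ i, |(m i : ℝ)|) := by
  have hC0 : 0 ≤ C := by
    have := (norm_nonneg _).trans (hC 0)
    simpa using this
  refine (hC _).trans ?_
  rw [mul_assoc, ← Real.exp_add]
  refine mul_le_mul_of_nonneg_left (Real.exp_le_exp.mpr ?_) hC0
  rw [← sub_eq_add_neg, neg_le_sub_iff_le_add, ← Finset.sum_add_distrib]
  refine Finset.sum_le_sum fun i _ => ?_
  have := abs_sub_abs_le_abs_sub (m i : ℝ) (-x i)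
  simp only [addInt]
  rw [abs_neg, sub_neg_eq_add, add_comm (m i : ℝ)] at this
  linarith

theorem summable_addInt (hC : ∀ v, ‖f v‖ ≤ C * Real.exp (-∑ i, |v i|)) (x : Fin n → ℝ) :
    Summable fun m : Fin n → ℤ => f (addInt x m) :=
  Summable.of_norm_bounded ((summable_exp_neg_sum_abs n).mul_left _) (norm_addInt_le hC x)

theorem continuous_tsum_addInt (hf : Continuous f)
    (hC : ∀ v, ‖f v‖ ≤ C * Real.exp (-∑ i, |v i|)) :
    Continuous fun x : Fin n → ℝ => ∑' m : Fin n → ℤ, f (addInt x m) := by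
  have hC0 : 0 ≤ C := by
    have := (norm_nonneg _).trans (hC 0)
    simpa using this
  rw [continuous_iff_continuousAt]
  intro x₀
  have hopen : IsOpen {x : Fin n → ℝ | ∑ i, |x i| < ∑ i, |x₀ i| + 1} :=
    isOpen_lt (by fun_prop) continuous_const
  have : ContinuousOn (fun x : Fin n → ℝ => ∑' m : Fin n → ℤ, f (addInt x m))
      {x : Fin n → ℝ | ∑ i, |x i| < ∑ i, |x₀ i| + 1} := by
    refine continuousOn_tsum
      (u := fun m => C * Real.exp (∑ i, |x₀ i| + 1) * Real.exp (-∑ i, |(m i : ℝ)|)) ?_ ?_ ?_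
    · intro m
      refine (hf.comp ?_).continuousOn
      unfold addInt
      fun_prop
    · exact (summable_exp_neg_sum_abs n).mul_left _
    · intro m x hx
      refine (norm_addInt_le hC x m).trans ?_
      gcongr
      exact le_of_lt hx
  exact this.continuousAt (hopen.mem_nhds (by simp))

theorem tsum_addInt_addInt (x : Fin n → ℝ) (k : Fin n → ℤ) :
    ∑' m : Fin n → ℤ, f (addInt (addInt x k) m) = ∑' m : Fin n → ℤ, f (addInt x m) := by
  rw [← (Equiv.addLeft k).tsum_eq fun m => f (addInt x m)]
  refine tsum_congr fun m => ?_
  congr 1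
  ext i
  simp [addInt, add_assoc]

theorem mFourier_coe (y : Fin n → ℤ) (x : Fin n → ℝ) :
    UnitAddTorus.mFourier y (fun i => (x i : UnitAddCircle)) =
      cexp (2 * Real.pi * Complex.I * ∑ i, (y i : ℂ) * (x i : ℂ)) := by
  simp only [UnitAddTorus.mFourier, ContinuousMap.coe_mk, fourier_coe_apply, Finset.mul_sum,
    Complex.exp_sum]
  refine Finset.prod_congr rfl fun i _ => ?_
  congr 1
  push_cast
  ring

theorem tsum_eq_tsum_fourier_pi (hf : Continuous f)
    (hC : ∀ v, ‖f v‖ ≤ C * Real.exp (-∑ i, |v i|))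
    (hs : Summable fun y : Fin n → ℤ =>
      ∫ v : Fin n → ℝ, cexp (2 * Real.pi * Complex.I * ∑ i, ((-y) i : ℂ) * (v i : ℂ)) * f v)
    (x : Fin n → ℝ) :
    ∑' m : Fin n → ℤ, f (addInt x m) = ∑' y : Fin n → ℤ,
      (∫ v : Fin n → ℝ, cexp (2 * Real.pi * Complex.I * ∑ i, ((-y) i : ℂ) * (v i : ℂ)) * f v) *
        cexp (2 * Real.pi * Complex.I * ∑ i, (y i : ℂ) * (x i : ℂ)) := by
  have hint : Integrable f :=
    ((integrable_exp_neg_sum_abs n).const_mul C).mono' hf.aestronglyMeasurable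
      (Filter.Eventually.of_forall hC)
  have hsurj : Function.Surjective ((↑) : ℝ → UnitAddCircle) := QuotientAddGroup.mk_surjective
  let rep : UnitAddTorus (Fin n) → (Fin n → ℝ) := fun t i => Function.surjInv hsurj (t i)
  let F₀ : (Fin n → ℝ) → ℂ := fun x => ∑' m : Fin n → ℤ, f (addInt x m)
  have hF : ∀ x : Fin n → ℝ, F₀ (rep fun i => (x i : UnitAddCircle)) = F₀ x := by
    intro x
    have : ∀ i, ∃ k : ℤ, rep (fun i => (x i : UnitAddCircle)) i = x i + k := by
      intro i
      have h1 : ((rep (fun i => (x i : UnitAddCircle)) i : ℝ) : UnitAddCircle) = (x i : ℝ) :=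
        Function.surjInv_eq hsurj _
      rw [← sub_eq_zero, ← AddCircle.coe_sub, AddCircle.coe_eq_zero_iff] at h1
      obtain ⟨k, hk⟩ := h1
      exact ⟨k, by simp at hk; linarith⟩
    choose k hk using this
    have : rep (fun i => (x i : UnitAddCircle)) = addInt x k := funext hk
    rw [this]
    exact tsum_addInt_addInt x k
  have hcont : Continuous fun t => F₀ (rep t) := by
    have hq : IsOpenQuotientMap (Pi.map fun _ : Fin n => ((↑) : ℝ → UnitAddCircle)) :=
      IsOpenQuotientMap.piMap fun _ => QuotientAddGroup.isOpenQuotientMap_mk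
    rw [← hq.continuous_comp_iff]
    have : ((fun t => F₀ (rep t)) ∘ Pi.map fun _ : Fin n => ((↑) : ℝ → UnitAddCircle)) = F₀ :=
      funext fun x => hF x
    rw [this]
    exact continuous_tsum_addInt hf hC
  let F : C(UnitAddTorus (Fin n), ℂ) := ⟨fun t => F₀ (rep t), hcont⟩
  have hcoeff : ∀ y : Fin n → ℤ, UnitAddTorus.mFourierCoeff F y =
      ∫ v : Fin n → ℝ, cexp (2 * Real.pi * Complex.I * ∑ i, ((-y) i : ℂ) * (v i : ℂ)) * f v := by
    intro y
    set g : (Fin n → ℝ) → ℂ :=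
      fun v => cexp (2 * Real.pi * Complex.I * ∑ i, ((-y) i : ℂ) * (v i : ℂ)) * f v with hg
    have hnorm : ∀ v, ‖g v‖ = ‖f v‖ := by
      intro v
      have : 2 * Real.pi * Complex.I * ∑ i, ((-y) i : ℂ) * (v i : ℂ) =
          ((2 * Real.pi * ∑ i, ((-y) i : ℝ) * v i : ℝ) : ℂ) * Complex.I := by
        push_cast
        ring
      rw [hg]
      simp only
      rw [norm_mul, this, Complex.norm_exp_ofReal_mul_I, one_mul]
    have hgint : Integrable g := by
      refine hint.norm.mono' ?_ (Filter.Eventually.of_forall fun v => (hnorm v).le)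
      exact (Continuous.mul (by fun_prop) hf).aestronglyMeasurable
    rw [UnitAddTorus.mFourierCoeff_eq_integral _ y 0]
    have h1 : ∀ x : Fin n → ℝ,
        UnitAddTorus.mFourier (-y) (fun i => (x i : UnitAddCircle)) •
          F (fun i => (x i : UnitAddCircle)) = ∑' m : Fin n → ℤ, g (addInt x m) := by
      intro x
      have : F (fun i => (x i : UnitAddCircle)) = F₀ x := hF x
      rw [this, mFourier_coe, smul_eq_mul, ← tsum_mul_left]
      refine tsum_congr fun m => ?_
      rw [hg]
      simp only
      congr 1
      rw [Complex.exp_eq_exp_iff_exists_int]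
      refine ⟨∑ i, y i * m i, ?_⟩
      simp only [addInt, Pi.neg_apply]
      push_cast
      simp only [mul_add, Finset.sum_add_distrib, neg_mul, Finset.sum_neg_distrib]
      ring
    have h2 : ∀ m : Fin n → ℤ, Integrable (fun x => g (addInt x m)) := fun m =>
      hgint.comp_add_right (fun i => (m i : ℝ))
    simp_rw [h1]
    change ∫ x in unitCube n, _ = _
    rw [← integral_tsum_of_summable_integral_norm (fun m => (h2 m).integrableOn)
      (hasSum_integral_unitCube hgint.norm).summable]
    exact (hasSum_integral_unitCube hgint).tsum_eq
  have hsum : Summable (UnitAddTorus.mFourierCoeff F) := by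
    refine hs.congr fun y => (hcoeff y).symm
  have := (UnitAddTorus.hasSum_mFourier_series_apply_of_summable hsum
    (fun i => (x i : UnitAddCircle))).tsum_eq
  have hFx : F (fun i => (x i : UnitAddCircle)) = F₀ x := hF x
  rw [hFx] at this
  change F₀ x = _
  rw [← this]
  refine tsum_congr fun y => ?_
  rw [hcoeff, mFourier_coe, smul_eq_mul]

end Poisson

section PosDef

variable {n : ℕ} {A : Matrix (Fin n) (Fin n) ℤ}

theorem det_ne_zero_of_pos (hpos : ∀ x : Fin n → ℤ, x ≠ 0 → 0 < x ⬝ᵥ A.mulVec x) : A.det ≠ 0 := by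
  intro h
  obtain ⟨v, hv, hv0⟩ := Matrix.exists_mulVec_eq_zero_iff.mpr h
  have := hpos v hv
  simp [hv0] at this

theorem real_form_nonneg (hpos : ∀ x : Fin n → ℤ, x ≠ 0 → 0 < x ⬝ᵥ A.mulVec x) (v : Fin n → ℝ) :
    0 ≤ v ⬝ᵥ (A.map (Int.cast : ℤ → ℝ)).mulVec v := by
  have hd : DenseRange (Pi.map fun _ : Fin n => ((↑) : ℚ → ℝ)) :=
    DenseRange.piMap fun _ => Rat.denseRange_cast
  refine hd.induction_on (p := fun v => 0 ≤ v ⬝ᵥ (A.map (Int.cast : ℤ → ℝ)).mulVec v) v ?_ ?_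
  · exact isClosed_le continuous_const (by fun_prop)
  · intro p
    obtain ⟨b, hb⟩ := IsLocalization.exist_integer_multiples_of_finite (nonZeroDivisors ℤ) p
    choose z hz using hb
    have hb0 : ((b : ℤ) : ℝ) ≠ 0 := by exact_mod_cast nonZeroDivisors.coe_ne_zero b
    have hzv : (fun i => (z i : ℝ)) = ((b : ℤ) : ℝ) • Pi.map (fun _ : Fin n => ((↑) : ℚ → ℝ)) p := by
      ext i
      have := hz i
      simp only [eq_intCast, zsmul_eq_mul] at this
      simp only [Pi.smul_apply, Pi.map_apply, smul_eq_mul]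
      exact_mod_cast congrArg (Rat.cast : ℚ → ℝ) this
    have h1 : (0 : ℤ) ≤ z ⬝ᵥ A.mulVec z := by
      by_cases h0 : z = 0
      · simp [h0]
      · exact (hpos z h0).le
    have h2 : ((z ⬝ᵥ A.mulVec z : ℤ) : ℝ) =
        (fun i => (z i : ℝ)) ⬝ᵥ (A.map (Int.cast : ℤ → ℝ)).mulVec (fun i => (z i : ℝ)) := by
      simp [dotProduct, mulVec]
    rw [hzv, mulVec_smul, dotProduct_smul, smul_dotProduct, smul_eq_mul, smul_eq_mul,
      ← mul_assoc] at h2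
    have h3 : (0 : ℝ) ≤ ((z ⬝ᵥ A.mulVec z : ℤ) : ℝ) := by exact_mod_cast h1
    rw [h2] at h3
    exact nonneg_of_mul_nonneg_right h3 (mul_self_pos.mpr hb0)

open scoped MatrixOrder in
theorem exists_real_factorization (hsymm : A.IsSymm)
    (hpos : ∀ x : Fin n → ℤ, x ≠ 0 → 0 < x ⬝ᵥ A.mulVec x) :
    ∃ M : Matrix (Fin n) (Fin n) ℝ, IsUnit M.det ∧ A.map (Int.cast : ℤ → ℝ) = Mᵀ * M := by
  have hsd : (A.map (Int.cast : ℤ → ℝ)).PosSemidef := by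
    refine PosSemidef.of_dotProduct_mulVec_nonneg ?_ fun v => ?_
    · ext i j
      simp [conjTranspose, hsymm.apply]
    · simpa using real_form_nonneg hpos v
  obtain ⟨M, hM⟩ := CStarAlgebra.nonneg_iff_eq_star_mul_self.mp hsd.nonneg
  have hM' : A.map (Int.cast : ℤ → ℝ) = Mᵀ * M := by
    rw [hM, star_eq_conjTranspose, conjTranspose_eq_transpose_of_trivial]
  refine ⟨M, ?_, hM'⟩
  have h1 : (A.map (Int.cast : ℤ → ℝ)).det = (A.det : ℝ) := by
    simpa using (Int.castRingHom ℝ).map_det A |>.symm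
  have h2 : (A.det : ℝ) ≠ 0 := by exact_mod_cast det_ne_zero_of_pos hpos
  rw [← h1, hM', det_mul, det_transpose] at h2
  exact isUnit_iff_ne_zero.mpr (left_ne_zero_of_mul h2)

theorem exists_form_lower_bound (hsymm : A.IsSymm)
    (hpos : ∀ x : Fin n → ℤ, x ≠ 0 → 0 < x ⬝ᵥ A.mulVec x) :
    ∃ δ : ℝ, 0 < δ ∧ ∀ v : Fin n → ℝ,
      δ * ∑ i, v i ^ 2 ≤ v ⬝ᵥ (A.map (Int.cast : ℤ → ℝ)).mulVec v := by
  obtain ⟨M, hM, hA⟩ := exists_real_factorization hsymm hpos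
  set K : ℝ := ∑ i, ∑ j, M⁻¹ i j ^ 2 with hK
  have hK0 : 0 ≤ K := Finset.sum_nonneg fun i _ => Finset.sum_nonneg fun j _ => sq_nonneg _
  refine ⟨(K + 1)⁻¹, by positivity, fun v => ?_⟩
  have hq : v ⬝ᵥ (A.map (Int.cast : ℤ → ℝ)).mulVec v = ∑ j, (M.mulVec v) j ^ 2 := by
    rw [hA, ← mulVec_mulVec, dotProduct_mulVec, vecMul_transpose]
    simp [dotProduct, sq]
  have hv : v = M⁻¹.mulVec (M.mulVec v) := by
    rw [mulVec_mulVec, nonsing_inv_mul _ hM, one_mulVec]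
  have hle : ∑ i, v i ^ 2 ≤ K * ∑ j, (M.mulVec v) j ^ 2 := by
    rw [hK, Finset.sum_mul]
    refine Finset.sum_le_sum fun i _ => ?_
    conv_lhs => rw [hv]
    exact Finset.sum_mul_sq_le_sq_mul_sq Finset.univ (fun j => M⁻¹ i j) (M.mulVec v)
  rw [hq, inv_mul_le_iff₀ (by positivity)]
  have : 0 ≤ ∑ j, (M.mulVec v) j ^ 2 := Finset.sum_nonneg fun i _ => sq_nonneg _
  linarith

theorem exists_gaussian_bound (hsymm : A.IsSymm)
    (hpos : ∀ x : Fin n → ℤ, x ≠ 0 → 0 < x ⬝ᵥ A.mulVec x) {a : ℝ} (ha : 0 < a) (K : ℝ) :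
    ∃ C : ℝ, 0 ≤ C ∧ ∀ v : Fin n → ℝ,
      Real.exp (-a * (v ⬝ᵥ (A.map (Int.cast : ℤ → ℝ)).mulVec v) + K * ∑ i, |v i|) ≤
        C * Real.exp (-∑ i, |v i|) := by
  obtain ⟨δ, hδ, hle⟩ := exists_form_lower_bound hsymm hpos
  refine ⟨Real.exp (∑ _i : Fin n, (K + 1) ^ 2 / (4 * (a * δ))), (Real.exp_pos _).le, fun v => ?_⟩
  rw [← Real.exp_add, Real.exp_le_exp]
  have h1 := mul_le_mul_of_nonneg_left (hle v) ha.le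
  have h2 : ∑ i, (K + 1) * |v i| ≤
      ∑ i : Fin n, ((K + 1) ^ 2 / (4 * (a * δ)) + a * δ * v i ^ 2) := by
    refine Finset.sum_le_sum fun i _ => ?_
    have h3 : 0 < a * δ := by positivity
    have h4 : (K + 1) ^ 2 / (4 * (a * δ)) + a * δ * v i ^ 2 - (K + 1) * |v i| =
        (a * δ) * (|v i| - (K + 1) / (2 * (a * δ))) ^ 2 := by
      rw [← sq_abs (v i)]
      field_simp
      ring
    have h5 : 0 ≤ (a * δ) * (|v i| - (K + 1) / (2 * (a * δ))) ^ 2 := by positivity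
    linarith
  rw [Finset.sum_add_distrib, ← Finset.mul_sum, ← Finset.mul_sum] at h2
  nlinarith

end PosDef

section Gaussian

variable {n : ℕ} {A : Matrix (Fin n) (Fin n) ℤ}

/-- The Gaussian `v ↦ exp (π i τ ᵗv A v + ᵗl v)`. -/
noncomputable def gaussian (A : Matrix (Fin n) (Fin n) ℤ) (τ : ℂ) (l : Fin n → ℂ) (v : Fin n → ℝ) :
    ℂ :=
  cexp (Real.pi * Complex.I * τ * ((v ⬝ᵥ (A.map (Int.cast : ℤ → ℝ)).mulVec v : ℝ) : ℂ) +
    ∑ i, l i * (v i : ℂ))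

theorem continuous_gaussian (τ : ℂ) (l : Fin n → ℂ) : Continuous (gaussian A τ l) := by
  unfold gaussian
  fun_prop

theorem norm_gaussian_le (τ : ℂ) (l : Fin n → ℂ) (v : Fin n → ℝ) :
    ‖gaussian A τ l v‖ ≤ Real.exp (-(Real.pi * τ.im) *
      (v ⬝ᵥ (A.map (Int.cast : ℤ → ℝ)).mulVec v) + (∑ i, ‖l i‖) * ∑ i, |v i|) := by
  rw [gaussian, Complex.norm_exp, Real.exp_le_exp, Complex.add_re]
  refine add_le_add (le_of_eq ?_) ?_
  · simp [Complex.mul_re]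
  · refine (Complex.re_le_norm _).trans ((norm_sum_le _ _).trans ?_)
    rw [Finset.mul_sum]
    refine Finset.sum_le_sum fun i _ => ?_
    rw [norm_mul, Complex.norm_real, Real.norm_eq_abs]
    exact mul_le_mul_of_nonneg_right
      (Finset.single_le_sum (f := fun i => ‖l i‖) (fun _ _ => norm_nonneg _) (Finset.mem_univ i))
      (abs_nonneg _)

theorem exists_norm_gaussian_bound (hsymm : A.IsSymm)
    (hpos : ∀ x : Fin n → ℤ, x ≠ 0 → 0 < x ⬝ᵥ A.mulVec x) {τ : ℂ} (hτ : 0 < τ.im)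
    (l : Fin n → ℂ) :
    ∃ C : ℝ, ∀ v, ‖gaussian A τ l v‖ ≤ C * Real.exp (-∑ i, |v i|) := by
  obtain ⟨C, -, hC⟩ := exists_gaussian_bound hsymm hpos (mul_pos Real.pi_pos hτ) (∑ i, ‖l i‖)
  exact ⟨C, fun v => (norm_gaussian_le τ l v).trans (hC v)⟩

theorem integral_comp_mulVec (W : Matrix (Fin n) (Fin n) ℝ) (hW : W.det ≠ 0)
    (f : (Fin n → ℝ) → ℂ) :
    ∫ v, f v = ((|W.det| : ℝ) : ℂ) * ∫ u, f (W.mulVec u) := by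
  have h := Real.map_matrix_volume_pi_eq_smul_volume_pi hW
  have he : MeasurableEmbedding (toLin' W) := by
    refine (LinearMap.isClosedEmbedding_of_injective ?_).measurableEmbedding
    refine LinearMap.ker_eq_bot.mpr fun u v huv => ?_
    exact mulVec_injective_iff_isUnit.mpr ((isUnit_iff_isUnit_det W).mpr hW.isUnit)
      (by simpa using huv)
  have h2 : ∫ u, f (W.mulVec u) = ∫ v, f v ∂(Measure.map (toLin' W) volume) := by
    rw [he.integral_map]
    simp
  rw [h2, h, integral_smul_measure, ENNReal.toReal_ofReal (abs_nonneg _), abs_inv]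
  rw [Complex.real_smul, ← mul_assoc]
  have : ((|W.det| : ℝ) : ℂ) ≠ 0 := by exact_mod_cast abs_ne_zero.mpr hW
  push_cast
  rw [mul_inv_cancel₀ this, one_mul]

theorem exists_integral_gaussian (hsymm : A.IsSymm)
    (hpos : ∀ x : Fin n → ℤ, x ≠ 0 → 0 < x ⬝ᵥ A.mulVec x) {k : ℕ} (hk : n = k + k) :
    ∃ κ : ℂ, κ ≠ 0 ∧ ∀ (τ : ℂ), 0 < τ.im → ∀ l : Fin n → ℂ,
      ∫ v, gaussian A τ l v = κ * (Complex.I / τ) ^ k *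
        cexp ((l ⬝ᵥ (A.map (Int.cast : ℤ → ℂ))⁻¹.mulVec l) * Complex.I / (4 * Real.pi * τ)) := by
  obtain ⟨M, hM, hA⟩ := exists_real_factorization hsymm hpos
  have hdet : M⁻¹.det ≠ 0 := by
    rw [det_nonsing_inv]
    simpa using hM.ne_zero
  refine ⟨((|M⁻¹.det| : ℝ) : ℂ), by exact_mod_cast abs_ne_zero.mpr hdet, fun τ hτ l => ?_⟩
  have hτ0 : τ ≠ 0 := by
    rintro rfl
    simp at hτ
  set Wc : Matrix (Fin n) (Fin n) ℂ := M⁻¹.map (algebraMap ℝ ℂ) with hWc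
  have hWA : Wc * Wcᵀ = (A.map (Int.cast : ℤ → ℂ))⁻¹ := by
    have h1 : A.map (Int.cast : ℤ → ℂ) = (A.map (Int.cast : ℤ → ℝ)).map (algebraMap ℝ ℂ) := by
      ext i j
      simp
    have h2 : (M⁻¹ * (M⁻¹)ᵀ) * A.map (Int.cast : ℤ → ℝ) = 1 := by
      rw [hA, Matrix.mul_assoc, ← Matrix.mul_assoc _ Mᵀ M, ← transpose_mul, mul_nonsing_inv _ hM,
        transpose_one, Matrix.one_mul, nonsing_inv_mul _ hM]
    symm
    apply inv_eq_left_inv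
    rw [h1, hWc, ← transpose_map, ← Matrix.map_mul, ← Matrix.map_mul, h2]
    simp
  rw [integral_comp_mulVec M⁻¹ hdet, mul_assoc]
  congr 1
  have hf : ∀ u : Fin n → ℝ, gaussian A τ l (M⁻¹.mulVec u) =
      cexp (-(-(Real.pi * Complex.I * τ)) * ∑ i, (u i : ℂ) ^ 2 +
        ∑ i, (Wcᵀ.mulVec l) i * u i) := by
    intro u
    rw [gaussian]
    congr 2
    · rw [neg_neg]
      congr 1
      rw [hA, ← mulVec_mulVec, dotProduct_mulVec, vecMul_transpose, mulVec_mulVec,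
        mul_nonsing_inv _ hM, one_mulVec]
      simp [dotProduct, sq]
    · have h3 : (fun i => ((M⁻¹.mulVec u) i : ℂ)) = Wc.mulVec (fun i => (u i : ℂ)) := by
        ext i
        simp [mulVec, dotProduct, hWc]
      change l ⬝ᵥ (fun i => ((M⁻¹.mulVec u) i : ℂ)) = Wcᵀ.mulVec l ⬝ᵥ (fun i => (u i : ℂ))
      rw [h3, dotProduct_mulVec, mulVec_transpose]
  simp_rw [hf]
  rw [GaussianFourier.integral_cexp_neg_mul_sum_add (by simpa using mul_pos Real.pi_pos hτ)]
  have hpi : (Real.pi : ℂ) ≠ 0 := by exact_mod_cast Real.pi_ne_zero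
  congr 1
  · have h4 : ((Fintype.card (Fin n) : ℕ) : ℂ) / 2 = (k : ℕ) := by
      rw [Fintype.card_fin, hk]
      push_cast
      ring
    rw [h4, Complex.cpow_natCast]
    congr 1
    field_simp
    simp
  · congr 1
    have h5 : ∑ i, (Wcᵀ.mulVec l) i ^ 2 = l ⬝ᵥ (A.map (Int.cast : ℤ → ℂ))⁻¹.mulVec l := by
      rw [← hWA, ← mulVec_mulVec, dotProduct_mulVec, ← mulVec_transpose]
      simp [dotProduct, sq]
    rw [h5]
    field_simp
    rw [Complex.I_sq, mul_neg_one]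

end Gaussian

section Inversion

variable {n : ℕ} {A B : Matrix (Fin n) (Fin n) ℤ} {N : ℕ}

theorem mul_comm_of_mul_eq_smul_one (hN : 0 < N) (hAB : A * B = (N : ℤ) • 1) :
    B * A = (N : ℤ) • 1 := by
  have h1 : A.det * B.det = (N : ℤ) ^ n := by
    rw [← det_mul, hAB, det_smul]
    simp
  have h2 : A.det ≠ 0 := by
    intro h
    rw [h, zero_mul] at h1
    exact pow_ne_zero n (by exact_mod_cast hN.ne') h1.symm
  have h3 : A * (B * A - (N : ℤ) • 1) = 0 := by
    rw [Matrix.mul_sub, ← Matrix.mul_assoc, hAB, Matrix.smul_mul, Matrix.mul_smul, Matrix.one_mul,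
      Matrix.mul_one, sub_self]
  have h4 : A.det • (B * A - (N : ℤ) • 1) = 0 := by
    rw [← one_mul (B * A - (N : ℤ) • 1), ← smul_mul_assoc, ← adjugate_mul, Matrix.mul_assoc, h3,
      Matrix.mul_zero]
  exact sub_eq_zero.mp ((smul_eq_zero.mp h4).resolve_left h2)

theorem isSymm_of_mul_eq_smul_one (hsymm : A.IsSymm) (hN : 0 < N) (hAB : A * B = (N : ℤ) • 1) :
    B.IsSymm := by
  have h1 : Bᵀ * A = (N : ℤ) • 1 := by
    have := congrArg transpose hAB
    rwa [transpose_mul, hsymm, transpose_smul, transpose_one] at this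
  have h2 : (N : ℤ) • Bᵀ = (N : ℤ) • B := by
    calc (N : ℤ) • Bᵀ = Bᵀ * (A * B) := by rw [hAB, Matrix.mul_smul, Matrix.mul_one]
      _ = (N : ℤ) • B := by rw [← Matrix.mul_assoc, h1, Matrix.smul_mul, Matrix.one_mul]
  exact smul_right_injective _ (by exact_mod_cast hN.ne' : (N : ℤ) ≠ 0) h2

theorem pos_of_mul_eq_smul_one
    (hpos : ∀ x : Fin n → ℤ, x ≠ 0 → 0 < x ⬝ᵥ A.mulVec x) (hN : 0 < N)
    (hAB : A * B = (N : ℤ) • 1) (y : Fin n → ℤ) (hy : y ≠ 0) : 0 < y ⬝ᵥ B.mulVec y := by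
  have hN' : (0 : ℤ) < N := by exact_mod_cast hN
  have h1 : A.mulVec (B.mulVec y) = (N : ℤ) • y := by
    rw [mulVec_mulVec, hAB, smul_mulVec, one_mulVec]
  have h2 : B.mulVec y ≠ 0 := by
    intro h
    rw [h, mulVec_zero] at h1
    exact hy ((smul_eq_zero.mp h1.symm).resolve_left hN'.ne')
  have h3 := hpos _ h2
  rw [h1, dotProduct_smul, dotProduct_comm, smul_eq_mul] at h3
  exact pos_of_mul_pos_right h3 hN'.le

theorem map_intCast_mul_of_mul_eq_smul_one (hAB : A * B = (N : ℤ) • 1) :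
    A.map (Int.cast : ℤ → ℂ) * B.map (Int.cast : ℤ → ℂ) = (N : ℂ) • 1 := by
  have h := congrArg (fun M : Matrix (Fin n) (Fin n) ℤ => M.map (Int.castRingHom ℂ)) hAB
  simp only [Matrix.map_mul] at h
  refine h.trans ?_
  ext i j
  rw [map_apply, Matrix.smul_apply, Matrix.smul_apply, one_apply, one_apply]
  split_ifs <;> simp

theorem map_inv_of_mul_eq_smul_one (hN : 0 < N) (hAB : A * B = (N : ℤ) • 1) :
    (A.map (Int.cast : ℤ → ℂ))⁻¹ = (N : ℂ)⁻¹ • B.map (Int.cast : ℤ → ℂ) := by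
  have hN' : (N : ℂ) ≠ 0 := by exact_mod_cast hN.ne'
  apply inv_eq_right_inv
  rw [Matrix.mul_smul, map_intCast_mul_of_mul_eq_smul_one hAB, smul_smul, inv_mul_cancel₀ hN',
    one_smul]

theorem im_neg_one_div_natCast_mul_pos (hN : 0 < N) {τ : ℂ} (hτ : 0 < τ.im) :
    0 < (-1 / (N * τ)).im := by
  have hτ0 : τ ≠ 0 := by
    rintro rfl
    simp at hτ
  have hN0 : (N : ℂ) ≠ 0 := by exact_mod_cast hN.ne'
  have h1 : (-1 / (N * τ)) = ((N : ℝ)⁻¹ : ℝ) * (-τ⁻¹) := by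
    push_cast
    field_simp
  rw [h1, Complex.im_ofReal_mul, Complex.neg_im, Complex.inv_im]
  have : 0 < Complex.normSq τ := Complex.normSq_pos.mpr hτ0
  have hN1 : (0 : ℝ) < N := by exact_mod_cast hN
  rw [neg_div, neg_neg]
  positivity

theorem exists_tsum_gaussian_inversion (hsymm : A.IsSymm)
    (hpos : ∀ x : Fin n → ℤ, x ≠ 0 → 0 < x ⬝ᵥ A.mulVec x) {k : ℕ} (hk : n = k + k) (hN : 0 < N)
    (hAB : A * B = (N : ℤ) • 1) :
    ∃ κ : ℂ, κ ≠ 0 ∧ ∀ (τ : ℂ), 0 < τ.im → ∀ (x : Fin n → ℝ) (l : Fin n → ℂ),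
      ∑' m : Fin n → ℤ, gaussian A τ ((A.map Int.cast).mulVec l) (addInt x m) =
        κ * (Complex.I / τ) ^ k *
          cexp ((l ⬝ᵥ (A.map Int.cast).mulVec l) * Complex.I / (4 * Real.pi * τ)) *
        ∑' y : Fin n → ℤ, gaussian B (-1 / (N * τ))
          (fun i => l i / τ + 2 * Real.pi * Complex.I * x i) (addInt 0 y) := by
  obtain ⟨κ, hκ, hint⟩ := exists_integral_gaussian hsymm hpos hk
  have hBsymm := isSymm_of_mul_eq_smul_one hsymm hN hAB
  have hBpos := pos_of_mul_eq_smul_one hpos hN hAB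
  have hpi : (Real.pi : ℂ) ≠ 0 := by exact_mod_cast Real.pi_ne_zero
  have hN0 : (N : ℂ) ≠ 0 := by exact_mod_cast hN.ne'
  refine ⟨κ, hκ, fun τ hτ x l => ?_⟩
  have hτ0 : τ ≠ 0 := by
    rintro rfl
    simp at hτ
  have hτ' := im_neg_one_div_natCast_mul_pos hN hτ
  have key : ∀ (x : Fin n → ℝ) (y : Fin n → ℤ),
      (∫ v : Fin n → ℝ, cexp (2 * Real.pi * Complex.I * ∑ i, ((-y) i : ℂ) * (v i : ℂ)) *
        gaussian A τ ((A.map Int.cast).mulVec l) v) *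
        cexp (2 * Real.pi * Complex.I * ∑ i, (y i : ℂ) * (x i : ℂ)) =
      κ * (Complex.I / τ) ^ k *
          cexp ((l ⬝ᵥ (A.map Int.cast).mulVec l) * Complex.I / (4 * Real.pi * τ)) *
       gaussian B (-1 / (N * τ))
          (fun i => l i / τ + 2 * Real.pi * Complex.I * x i) (addInt 0 y) := by
    intro x y
    set yc : Fin n → ℂ := fun i => (y i : ℂ) with hyc
    set A' : Matrix (Fin n) (Fin n) ℂ := A.map Int.cast with hA'
    set B' : Matrix (Fin n) (Fin n) ℂ := B.map Int.cast with hB'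
    have h1 : ∀ v : Fin n → ℝ,
        cexp (2 * Real.pi * Complex.I * ∑ i, ((-y) i : ℂ) * (v i : ℂ)) *
        gaussian A τ (A'.mulVec l) v =
        gaussian A τ (A'.mulVec l - (2 * Real.pi * Complex.I) • yc) v := by
      intro v
      rw [gaussian, gaussian, ← Complex.exp_add]
      congr 1
      simp only [Pi.sub_apply, Pi.smul_apply, sub_mul, Finset.sum_sub_distrib, smul_eq_mul, hyc,
        mul_assoc, ← Finset.mul_sum, Pi.neg_apply, Int.cast_neg, neg_mul, Finset.sum_neg_distrib]
      ring
    simp_rw [h1]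
    rw [hint τ hτ, mul_assoc, mul_assoc (κ * _)]
    congr 1
    rw [gaussian, ← Complex.exp_add, ← Complex.exp_add]
    congr 1
    have hinv : A'⁻¹ = (N : ℂ)⁻¹ • B' := map_inv_of_mul_eq_smul_one hN hAB
    have hBA : B' * A' = (N : ℂ) • 1 :=
      map_intCast_mul_of_mul_eq_smul_one (mul_comm_of_mul_eq_smul_one hN hAB)
    have hBsymm' : B'ᵀ = B' := by
      ext i j
      simp [hB', hBsymm.apply]
    have hq : (((addInt 0 y) ⬝ᵥ (B.map (Int.cast : ℤ → ℝ)).mulVec (addInt 0 y) : ℝ) : ℂ) =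
        yc ⬝ᵥ B'.mulVec yc := by
      simp [dotProduct, mulVec, addInt, hyc, hB']
    have hl : ∑ i, (l i / τ + 2 * Real.pi * Complex.I * x i) * ((addInt 0 y i : ℝ) : ℂ) =
        (l ⬝ᵥ yc) / τ + 2 * Real.pi * Complex.I * ∑ i, (y i : ℂ) * (x i : ℂ) := by
      simp only [addInt, add_mul, Finset.sum_add_distrib, dotProduct, Finset.sum_div,
        Finset.mul_sum, hyc]
      congr 1
      · refine Finset.sum_congr rfl fun i _ => ?_
        simp
        ring
      · refine Finset.sum_congr rfl fun i _ => ?_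
        simp
        ring
    rw [hq, hl, hinv]
    have e1 : B'.mulVec (A'.mulVec l) = (N : ℂ) • l := by
      rw [mulVec_mulVec, hBA, smul_mulVec, one_mulVec]
    have e2 : A'.mulVec l ⬝ᵥ B'.mulVec yc = N * (l ⬝ᵥ yc) := by
      rw [dotProduct_mulVec, ← mulVec_transpose, hBsymm', e1, smul_dotProduct, smul_eq_mul]
    have e3 : ((A'.mulVec l - (2 * Real.pi * Complex.I) • yc) ⬝ᵥ
        ((N : ℂ)⁻¹ • B').mulVec (A'.mulVec l - (2 * Real.pi * Complex.I) • yc)) =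
        l ⬝ᵥ A'.mulVec l - 4 * Real.pi * Complex.I * (l ⬝ᵥ yc)
          - 4 * Real.pi ^ 2 / N * (yc ⬝ᵥ B'.mulVec yc) := by
      rw [smul_mulVec, mulVec_sub, mulVec_smul, e1]
      simp only [sub_dotProduct, dotProduct_smul, smul_dotProduct, dotProduct_sub, smul_eq_mul, e2]
      rw [dotProduct_comm (A'.mulVec l) l, dotProduct_comm yc l]
      field_simp
      ring_nf
      simp
      ring
    rw [e3]
    field_simp
    ring_nf
    simp
  obtain ⟨C, hC⟩ := exists_norm_gaussian_bound hsymm hpos hτ ((A.map Int.cast).mulVec l)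
  have hs : Summable fun y : Fin n → ℤ => ∫ v : Fin n → ℝ,
      cexp (2 * Real.pi * Complex.I * ∑ i, ((-y) i : ℂ) * (v i : ℂ)) *
        gaussian A τ ((A.map Int.cast).mulVec l) v := by
    obtain ⟨C', hC'⟩ := exists_norm_gaussian_bound hBsymm hBpos hτ'
      (fun i => l i / τ + 2 * Real.pi * Complex.I * ((0 : Fin n → ℝ) i : ℂ))
    refine ((summable_addInt hC' 0).mul_left (κ * (Complex.I / τ) ^ k *
      cexp ((l ⬝ᵥ (A.map Int.cast).mulVec l) * Complex.I / (4 * Real.pi * τ)))).congr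
      fun y => ?_
    rw [← key 0 y]
    simp
  rw [tsum_eq_tsum_fourier_pi (continuous_gaussian τ _) hC hs x]
  simp_rw [key]
  rw [tsum_mul_left]

end Inversion

section Bilinear

variable {n : ℕ} {A : Matrix (Fin n) (Fin n) ℤ}

/-- The complex bilinear form `ᵗx M y` attached to an integer matrix. -/
noncomputable def bilin (M : Matrix (Fin n) (Fin n) ℤ) (x y : Fin n → ℂ) : ℂ :=
  x ⬝ᵥ (M.map (Int.cast : ℤ → ℂ)).mulVec y

theorem bilin_add_left (M : Matrix (Fin n) (Fin n) ℤ) (x x' y : Fin n → ℂ) :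
    bilin M (x + x') y = bilin M x y + bilin M x' y := add_dotProduct _ _ _

theorem bilin_add_right (M : Matrix (Fin n) (Fin n) ℤ) (x y y' : Fin n → ℂ) :
    bilin M x (y + y') = bilin M x y + bilin M x y' := by
  simp [bilin, mulVec_add]

theorem bilin_smul_left (M : Matrix (Fin n) (Fin n) ℤ) (t : ℂ) (x y : Fin n → ℂ) :
    bilin M (t • x) y = t * bilin M x y := smul_dotProduct _ _ _

theorem bilin_smul_right (M : Matrix (Fin n) (Fin n) ℤ) (t : ℂ) (x y : Fin n → ℂ) :
    bilin M x (t • y) = t * bilin M x y := by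
  simp [bilin, mulVec_smul]

theorem bilin_comm (hsymm : A.IsSymm) (x y : Fin n → ℂ) : bilin A x y = bilin A y x := by
  have h : (A.map (Int.cast : ℤ → ℂ))ᵀ = A.map Int.cast := by
    rw [← transpose_map, hsymm]
  rw [bilin, bilin, dotProduct_mulVec, ← mulVec_transpose, h, dotProduct_comm]

theorem mulVec_intCast (M : Matrix (Fin n) (Fin n) ℤ) (y : Fin n → ℤ) :
    (M.map (Int.cast : ℤ → ℂ)).mulVec (fun i => (y i : ℂ)) = fun i => ((M.mulVec y i : ℤ) : ℂ) := by
  ext i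
  simp [mulVec, dotProduct]

theorem dotProduct_intCast (x y : Fin n → ℤ) :
    (fun i => (x i : ℂ)) ⬝ᵥ (fun i => (y i : ℂ)) = ((x ⬝ᵥ y : ℤ) : ℂ) := by
  simp [dotProduct]

theorem bilin_intCast (M : Matrix (Fin n) (Fin n) ℤ) (x y : Fin n → ℤ) :
    bilin M (fun i => (x i : ℂ)) (fun i => (y i : ℂ)) = ((x ⬝ᵥ M.mulVec y : ℤ) : ℂ) := by
  rw [bilin, mulVec_intCast, dotProduct_intCast]

theorem even_form {M : Matrix (Fin n) (Fin n) ℤ} (hsymm : M.IsSymm) (heven : ∀ i, 2 ∣ M i i)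
    (x : Fin n → ℤ) : Even (x ⬝ᵥ M.mulVec x) := by
  rw [even_iff_two_dvd]
  refine (ZMod.intCast_zmod_eq_zero_iff_dvd _ 2).mp ?_
  have h1 : x ⬝ᵥ M.mulVec x = ∑ i, ∑ j, x i * M i j * x j := by
    simp [dotProduct, mulVec, Finset.mul_sum, mul_assoc]
  rw [h1, ← Finset.sum_product']
  push_cast
  refine Finset.sum_involution (fun p _ => (p.2, p.1)) ?_ ?_ ?_ ?_
  · rintro ⟨i, j⟩ -
    have : M j i = M i j := hsymm.apply i j
    rw [this]
    have h2 : (2 : ZMod 2) = 0 := rfl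
    linear_combination (x i * M i j * x j : ZMod 2) * h2
  · rintro ⟨i, j⟩ - hne heq
    obtain rfl : j = i := congrArg Prod.fst heq
    apply hne
    rw [(ZMod.intCast_zmod_eq_zero_iff_dvd (M j j) 2).mpr (by exact_mod_cast heven j)]
    simp
  · simp
  · simp

theorem cexp_eq_cexp_of_int {x y : ℂ} (m : ℤ) (h : x = y + m * (2 * Real.pi * Complex.I)) :
    cexp x = cexp y := Complex.exp_eq_exp_iff_exists_int.mpr ⟨m, h⟩

theorem gaussian_eq_bilin (hsymm : A.IsSymm) (τ : ℂ) (l : Fin n → ℂ) (v : Fin n → ℝ) :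
    gaussian A τ ((A.map Int.cast).mulVec l) v =
      cexp (Real.pi * Complex.I * τ * bilin A (fun i => (v i : ℂ)) (fun i => (v i : ℂ)) +
        bilin A l (fun i => (v i : ℂ))) := by
  rw [gaussian, bilin_comm hsymm l]
  congr 2
  · simp [bilin, mulVec, dotProduct]
  · simp [bilin, dotProduct, mul_comm]

end Bilinear

section GaussSum

variable {n : ℕ} {A : Matrix (Fin n) (Fin n) ℤ}

/-- The phase `exp (π i (b/d) ᵗz A z)`. -/
noncomputable def phase (A : Matrix (Fin n) (Fin n) ℤ) (b : ℤ) (d : ℕ) (z : Fin n → ℤ) : ℂ :=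
  cexp (Real.pi * Complex.I * (b / d) * ((z ⬝ᵥ A.mulVec z : ℤ) : ℂ))

/-- The quadratic Gauss sum of the form `ᵗx A x / 2` modulo `d`. -/
noncomputable def formGaussSum (A : Matrix (Fin n) (Fin n) ℤ) (b : ℤ) (d : ℕ) [NeZero d] : ℂ :=
  ∑ r : Fin n → ZMod d, phase A b d (fun i => ((r i).val : ℤ))

theorem phase_congr (hsymm : A.IsSymm) (heven : ∀ i, 2 ∣ A i i) (b : ℤ) (d : ℕ) [NeZero d]
    (z y : Fin n → ℤ) : phase A b d (fun i => z i + d * y i) = phase A b d z := by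
  obtain ⟨e, he⟩ := even_form hsymm heven y
  have hd : (d : ℂ) ≠ 0 := by exact_mod_cast NeZero.ne d
  refine cexp_eq_cexp_of_int (b * (z ⬝ᵥ A.mulVec y) + b * d * e) ?_
  have h1 : (fun i => ((z i + d * y i : ℤ) : ℂ)) =
      (fun i => (z i : ℂ)) + (d : ℂ) • (fun i => (y i : ℂ)) := by
    ext i
    simp
  have h2 := bilin_intCast A y y
  rw [he] at h2
  push_cast
  rw [← bilin_intCast, ← bilin_intCast, ← bilin_intCast, h1]
  simp only [bilin_add_left, bilin_add_right, bilin_smul_left, bilin_smul_right, h2]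
  rw [bilin_comm hsymm (fun i => (y i : ℂ))]
  field_simp
  push_cast
  ring

theorem sum_phase_add (hsymm : A.IsSymm) (heven : ∀ i, 2 ∣ A i i) (b : ℤ) (d : ℕ) [NeZero d]
    (v : Fin n → ℤ) :
    ∑ r : Fin n → ZMod d, phase A b d (fun i => ((r i).val : ℤ) + v i) = formGaussSum A b d := by
  rw [formGaussSum, ← Equiv.sum_comp (Equiv.addRight (fun i => (v i : ZMod d)))
    fun r : Fin n → ZMod d => phase A b d fun i => ((r i).val : ℤ)]
  refine Finset.sum_congr rfl fun r _ => ?_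
  have h : ∀ i, ∃ m : ℤ, ((r i).val : ℤ) + v i = (((r + fun i => (v i : ZMod d)) i).val : ℤ) + d * m := by
    intro i
    have h1 : (((((r i).val : ℤ) + v i - (((r + fun i => (v i : ZMod d)) i).val : ℤ) : ℤ)) : ZMod d)
        = 0 := by
      simp
    obtain ⟨m, hm⟩ := (ZMod.intCast_zmod_eq_zero_iff_dvd _ d).mp h1
    exact ⟨m, by linarith⟩
  choose m hm using h
  rw [funext hm, phase_congr hsymm heven]
  rfl

theorem sum_phase_shift {B : Matrix (Fin n) (Fin n) ℤ} {N : ℕ} (hsymm : A.IsSymm)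
    (heven : ∀ i, 2 ∣ A i i) (hN : 0 < N) (hAB : A * B = (N : ℤ) • 1) (hBeven : ∀ i, 2 ∣ B i i)
    {h u : Fin n → ℤ} (hu : A.mulVec h = (N : ℤ) • u) {a b c : ℤ} {d : ℕ} [NeZero d]
    (hdet : a * d - b * (N * c) = 1) (y : Fin n → ℤ) :
    ∑ r : Fin n → ZMod d, cexp (Real.pi * Complex.I * (
      (b / d) * bilin A (fun i => h i / N + (r i).val) (fun i => h i / N + (r i).val) +
      2 * ((fun i => (y i : ℂ)) ⬝ᵥ fun i => h i / N + ((r i).val : ℂ)) / d -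
      c / d * bilin B (fun i => (y i : ℂ)) (fun i => (y i : ℂ)))) =
    cexp (Real.pi * Complex.I * (2 * a * ((fun i => (y i : ℂ)) ⬝ᵥ fun i => (h i / N : ℂ)))) *
      cexp (Real.pi * Complex.I * (a * b * bilin A (fun i => (h i / N : ℂ)) fun i => (h i / N : ℂ))) *
      formGaussSum A b d := by
  have hBsymm := isSymm_of_mul_eq_smul_one hsymm hN hAB
  have hN0 : (N : ℂ) ≠ 0 := by exact_mod_cast hN.ne'
  have hd : (d : ℂ) ≠ 0 := by exact_mod_cast NeZero.ne d
  obtain ⟨e, he⟩ := even_form hBsymm hBeven y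
  obtain ⟨f, hf⟩ := even_form hBsymm hBeven u
  have hBu : B.mulVec u = h := by
    have h1 : (N : ℤ) • B.mulVec u = (N : ℤ) • h := by
      rw [← mulVec_smul, ← hu, mulVec_mulVec, mul_comm_of_mul_eq_smul_one hN hAB, smul_mulVec,
        one_mulVec]
    exact smul_right_injective _ (by exact_mod_cast hN.ne' : (N : ℤ) ≠ 0) h1
  set v : Fin n → ℤ := fun i => -c * B.mulVec y i - b * c * h i with hv
  rw [← sum_phase_add hsymm heven b d v, Finset.mul_sum]
  refine Finset.sum_congr rfl fun r _ => ?_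
  rw [phase, ← Complex.exp_add, ← Complex.exp_add]
  refine cexp_eq_cexp_of_int
    (a * (y ⬝ᵥ fun i => ((r i).val : ℤ)) - a * c * e +
      a * b * (u ⬝ᵥ fun i => ((r i).val : ℤ) + v i) + a * b * b * c * f) ?_
  set rc : Fin n → ℂ := fun i => ((r i).val : ℂ) with hrc
  set hc : Fin n → ℂ := fun i => (h i / N : ℂ) with hhc
  set yc : Fin n → ℂ := fun i => (y i : ℂ) with hyc
  set wc : Fin n → ℂ := (B.map Int.cast).mulVec yc with hwc
  set uc : Fin n → ℂ := fun i => (u i : ℂ) with huc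
  have e1 : (fun i => h i / N + ((r i).val : ℂ)) = hc + rc := rfl
  have hhN : (fun i => (h i : ℂ)) = (N : ℂ) • hc := by
    ext i
    simp [hhc]
    field_simp
  have e2 : (fun i => ((((r i).val : ℤ) + v i : ℤ) : ℂ)) = rc + (-c : ℂ) • wc + (-(b * c * N) : ℂ) • hc := by
    ext i
    have h1 := congrFun (mulVec_intCast B y) i
    have h2 := congrFun hhN i
    simp only [Pi.smul_apply, smul_eq_mul] at h2
    simp only [hwc, Pi.add_apply, Pi.smul_apply, hyc, h1, hv, hrc, smul_eq_mul]
    push_cast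
    rw [h2]
    ring
  have hAh : (A.map Int.cast).mulVec hc = uc := by
    have h1 := mulVec_intCast A h
    rw [hhN, mulVec_smul, hu] at h1
    ext i
    have h2 := congrFun h1 i
    simp only [Pi.smul_apply, smul_eq_mul, Int.cast_mul, Int.cast_natCast] at h2
    exact mul_left_cancel₀ hN0 h2
  have hAw : (A.map Int.cast).mulVec wc = (N : ℂ) • yc := by
    rw [hwc, mulVec_mulVec, map_intCast_mul_of_mul_eq_smul_one hAB, smul_mulVec, one_mulVec]
  have hwA : ∀ x, bilin A x wc = N * (yc ⬝ᵥ x) := by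
    intro x
    rw [bilin, hAw, dotProduct_smul, smul_eq_mul, dotProduct_comm]
  have hyw : yc ⬝ᵥ wc = 2 * e := by
    have := bilin_intCast B y y
    rw [he] at this
    rw [hwc]
    refine this.trans ?_
    push_cast
    ring
  have hhA : ∀ x, bilin A x hc = uc ⬝ᵥ x := by
    intro x
    rw [bilin, hAh, dotProduct_comm]
  have huh : N * (uc ⬝ᵥ hc) = 2 * f := by
    rw [← smul_eq_mul, ← dotProduct_smul, ← hhN]
    have h1 := dotProduct_intCast u h
    rw [← hBu, hf] at h1
    rw [← hBu]
    refine h1.trans ?_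
    push_cast
    ring
  have huw : uc ⬝ᵥ wc = N * (yc ⬝ᵥ hc) := by
    rw [← hhA, bilin_comm hsymm, hwA]
  have hBy : bilin B yc yc = 2 * e := hyw
  have hdet' : (a : ℂ) * d - b * (N * c) = 1 := by exact_mod_cast hdet
  rw [e1, ← bilin_intCast, e2]
  push_cast
  rw [← dotProduct_intCast, ← dotProduct_intCast, e2]
  have e3 : (fun i => (((r i).val : ℤ) : ℂ)) = rc := by
    ext i
    simp [hrc]
  rw [e3]
  have hwA' : ∀ x, bilin A wc x = N * (yc ⬝ᵥ x) := fun x => by rw [bilin_comm hsymm, hwA]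
  have hhA' : ∀ x, bilin A hc x = uc ⬝ᵥ x := fun x => by rw [bilin_comm hsymm, hhA]
  change _ = _ + (a * (yc ⬝ᵥ rc) - a * c * e +
    a * b * (uc ⬝ᵥ (rc + (-c : ℂ) • wc + (-(b * c * N) : ℂ) • hc)) + a * b * b * c * f) * (2 * Real.pi * Complex.I)
  simp only [bilin_add_left, bilin_add_right, bilin_smul_left, bilin_smul_right, hwA, hhA, hwA',
    hhA', dotProduct_add, dotProduct_smul, hyw, huw, hBy, smul_eq_mul]
  field_simp
  linear_combination -(2 * (1 - b * c * N) * (yc ⬝ᵥ hc) + 2 * (yc ⬝ᵥ rc) - 2 * c * e +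
    2 * b * (uc ⬝ᵥ rc) + b * (1 - b * c * N) * (uc ⬝ᵥ hc)) * hdet' + a * b * b * c * d * huh

end GaussSum

section Transformation

variable {n : ℕ} {A : Matrix (Fin n) (Fin n) ℤ}

/-- Euclidean division by `d` as an equivalence `ZMod d × ℤ ≃ ℤ`. -/
def zmodProdIntEquiv (d : ℕ) [NeZero d] : ZMod d × ℤ ≃ ℤ where
  toFun p := p.1.val + d * p.2
  invFun z := ((z : ZMod d), z / d)
  left_inv := by
    rintro ⟨r, y⟩
    have hd : (d : ℤ) ≠ 0 := by exact_mod_cast NeZero.ne d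
    have h1 : ((r.val : ℤ) / d) = 0 :=
      Int.ediv_eq_zero_of_lt (by positivity) (by exact_mod_cast r.val_lt)
    ext
    · simp
    · change ((r.val : ℤ) + d * y) / d = y
      rw [Int.add_mul_ediv_left _ _ hd, h1, zero_add]
  right_inv z := by
    simp only [ZMod.val_intCast]
    exact Int.emod_add_mul_ediv z d

theorem tsum_eq_sum_tsum_residues (d : ℕ) [NeZero d] {F : (Fin n → ℤ) → ℂ} (hF : Summable F) :
    ∑' z, F z = ∑ r : Fin n → ZMod d, ∑' y : Fin n → ℤ, F (fun i => ((r i).val : ℤ) + d * y i) := by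
  let e : (Fin n → ZMod d) × (Fin n → ℤ) ≃ (Fin n → ℤ) :=
    (Equiv.arrowProdEquivProdArrow (Fin n) (fun _ => ZMod d) (fun _ => ℤ)).symm.trans
      (Equiv.piCongrRight fun _ => zmodProdIntEquiv d)
  rw [← e.tsum_eq]
  exact (Summable.tsum_prod (e.summable_iff.mpr hF)).trans (tsum_fintype _)

theorem tsum_gaussian_transform {B : Matrix (Fin n) (Fin n) ℤ} {N k : ℕ} (hsymm : A.IsSymm)
    (hpos : ∀ x : Fin n → ℤ, x ≠ 0 → 0 < x ⬝ᵥ A.mulVec x) (hk : n = k + k)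
    (heven : ∀ i, 2 ∣ A i i) (hN : 0 < N) (hAB : A * B = (N : ℤ) • 1) (hBeven : ∀ i, 2 ∣ B i i)
    {h u : Fin n → ℤ} (hu : A.mulVec h = (N : ℤ) • u) {a b c : ℤ} {d : ℕ} [NeZero d]
    (hdet : a * d - b * (N * c) = 1) {τ τ₁ : ℂ} (hτ : 0 < τ.im) (hτ₁ : 0 < τ₁.im)
    (hττ : τ₁ * (N * c * τ + d) = a * τ + b) (l : Fin n → ℂ) :
    ∑' z : Fin n → ℤ, gaussian A τ₁ ((A.map Int.cast).mulVec l) (addInt (fun i => h i / N) z) =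
      formGaussSum A b d / d ^ k *
      cexp (Real.pi * Complex.I * (a * b * bilin A (fun i => (h i / N : ℂ)) fun i => (h i / N : ℂ)))
      * (N * c * τ + d) ^ k *
      cexp (-Complex.I * (N * c) * (N * c * τ + d) / (4 * Real.pi) * bilin A l l) *
      ∑' z : Fin n → ℤ, gaussian A τ ((A.map Int.cast).mulVec ((N * c * τ + d) • l))
        (addInt (fun i => (a * h i : ℤ) / N) z) := by
  have hBsymm := isSymm_of_mul_eq_smul_one hsymm hN hAB
  have hBpos := pos_of_mul_eq_smul_one hpos hN hAB
  have hN0 : (N : ℂ) ≠ 0 := by exact_mod_cast hN.ne'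
  have hd : (d : ℂ) ≠ 0 := by exact_mod_cast NeZero.ne d
  have hpi : (Real.pi : ℂ) ≠ 0 := by exact_mod_cast Real.pi_ne_zero
  have hτ0 : τ ≠ 0 := by
    rintro rfl
    simp at hτ
  have hdet' : (a : ℂ) * d - b * (N * c) = 1 := by exact_mod_cast hdet
  set σ : ℂ := d ^ 2 * τ₁ - b * d with hσ
  set j : ℂ := N * c * τ + d with hj
  have hσim : 0 < σ.im := by
    have : σ = ((d ^ 2 : ℝ) : ℂ) * τ₁ - ((b * d : ℝ) : ℂ) := by
      rw [hσ]
      push_cast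
      ring
    rw [this, Complex.sub_im, Complex.im_ofReal_mul, Complex.ofReal_im, sub_zero]
    have : (0 : ℝ) < d := by exact_mod_cast Nat.pos_of_ne_zero (NeZero.ne d)
    positivity
  have hσ0 : σ ≠ 0 := by
    intro h
    simp [h] at hσim
  have hσj : σ * j = d * τ := by
    rw [hσ, sub_mul, mul_assoc, hττ, hj]
    linear_combination (d * τ : ℂ) * hdet'
  have hj0 : j ≠ 0 := by
    intro h
    rw [h, mul_zero] at hσj
    exact mul_ne_zero hd hτ0 hσj.symm
  obtain ⟨κ, hκ, hinv⟩ := exists_tsum_gaussian_inversion hsymm hpos hk hN hAB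
  set x : (Fin n → ZMod d) → Fin n → ℝ := fun r i => (h i / N + (r i).val) / d with hx
  obtain ⟨C, hC⟩ := exists_norm_gaussian_bound hsymm hpos hτ₁ ((A.map Int.cast).mulVec l)
  have hterm : ∀ (r : Fin n → ZMod d) (y : Fin n → ℤ),
      gaussian A τ₁ ((A.map Int.cast).mulVec l)
        (addInt (fun i => h i / N) (fun i => ((r i).val : ℤ) + d * y i)) =
      cexp (Real.pi * Complex.I * ((b / d) *
        bilin A (fun i => h i / N + (r i).val) (fun i => h i / N + (r i).val))) *
        gaussian A σ ((A.map Int.cast).mulVec ((d : ℂ) • l)) (addInt (x r) y) := by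
    intro r y
    obtain ⟨e, he⟩ := even_form hsymm heven y
    rw [gaussian_eq_bilin hsymm, gaussian_eq_bilin hsymm, ← Complex.exp_add]
    refine cexp_eq_cexp_of_int
      (b * (u ⬝ᵥ y) + b * ((fun i => ((r i).val : ℤ)) ⬝ᵥ A.mulVec y) + b * d * e) ?_
    set hc : Fin n → ℂ := fun i => (h i / N : ℂ) with hhc
    set rc : Fin n → ℂ := fun i => (((r i).val : ℤ) : ℂ) with hrc
    set yc : Fin n → ℂ := fun i => (y i : ℂ) with hyc
    have e1 : (fun i => h i / N + ((r i).val : ℂ)) = hc + rc := by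
      ext i
      simp [hhc, hrc]
    have e2 : (fun i => ((addInt (fun i => (h i : ℝ) / N)
        (fun i => ((r i).val : ℤ) + d * y i) i : ℝ) : ℂ)) = hc + rc + (d : ℂ) • yc := by
      ext i
      simp [addInt, hhc, hrc, hyc, add_assoc, -ZMod.natCast_val]
    have e3 : (fun i => ((addInt (x r) y i : ℝ) : ℂ)) = (d : ℂ)⁻¹ • (hc + rc) + yc := by
      ext i
      simp [addInt, hhc, hrc, hyc, hx, -ZMod.natCast_val]
      field_simp
    have e4 : bilin A yc yc = e + e := by
      rw [hyc, bilin_intCast, he]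
      push_cast
      ring
    have e5 : bilin A hc yc = ((u ⬝ᵥ y : ℤ) : ℂ) := by
      have h1 : (A.map Int.cast).mulVec ((N : ℂ) • hc) = fun i => ((N * u i : ℤ) : ℂ) := by
        have h2 := mulVec_intCast A h
        rw [hu] at h2
        refine Eq.trans ?_ h2
        congr 1
        ext i
        simp [hhc]
        field_simp
      have h3 : (N : ℂ) * bilin A hc yc = N * ((u ⬝ᵥ y : ℤ) : ℂ) := by
        rw [bilin_comm hsymm, ← bilin_smul_right, bilin, h1]
        simp only [dotProduct, hyc, Int.cast_sum, Finset.mul_sum]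
        refine Finset.sum_congr rfl fun i _ => ?_
        push_cast
        ring
      exact mul_left_cancel₀ hN0 h3
    have e6 := bilin_intCast A (fun i => ((r i).val : ℤ)) y
    rw [e1, e2, e3, hσ]
    push_cast
    rw [← e6, ← e5]
    change _ = _ + (b * _ + b * bilin A rc yc + _) * _
    simp only [bilin_add_left, bilin_add_right, bilin_smul_left, bilin_smul_right, e4]
    rw [bilin_comm hsymm rc hc, bilin_comm hsymm yc hc, bilin_comm hsymm yc rc]
    field_simp
    ring
  have hsumB : ∀ l' : Fin n → ℂ, Summable fun y : Fin n → ℤ =>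
      gaussian B (-1 / (N * σ)) l' (addInt 0 y) := by
    intro l'
    obtain ⟨C', hC'⟩ := exists_norm_gaussian_bound hBsymm hBpos
      (im_neg_one_div_natCast_mul_pos hN hσim) l'
    exact summable_addInt hC' 0
  have hK : ∀ y : Fin n → ℤ, ∑ r : Fin n → ZMod d,
      cexp (Real.pi * Complex.I * ((b / d) *
        bilin A (fun i => h i / N + (r i).val) (fun i => h i / N + (r i).val))) *
      gaussian B (-1 / (N * σ))
          (fun i => ((d : ℂ) • l) i / σ + 2 * Real.pi * Complex.I * x r i) (addInt 0 y) =
      cexp (Real.pi * Complex.I *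
        (a * b * bilin A (fun i => (h i / N : ℂ)) fun i => (h i / N : ℂ))) * formGaussSum A b d *
      gaussian B (-1 / (N * τ)) (fun i => (j • l) i / τ +
        2 * Real.pi * Complex.I * (((a * h i : ℤ) / N : ℝ) : ℂ)) (addInt 0 y) := by
    intro y
    have hquad : (((addInt 0 y) ⬝ᵥ (B.map (Int.cast : ℤ → ℝ)).mulVec (addInt 0 y) : ℝ) : ℂ) =
        bilin B (fun i => (y i : ℂ)) (fun i => (y i : ℂ)) := by
      simp [dotProduct, mulVec, addInt, bilin]
    have hlin : ∀ (s t : ℂ) (m : Fin n → ℂ), ∑ i, ((s • l) i / t + 2 * Real.pi * Complex.I * m i) *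
        ((addInt 0 y i : ℝ) : ℂ) = s / t * (l ⬝ᵥ fun i => (y i : ℂ)) +
          2 * Real.pi * Complex.I * ((fun i => (y i : ℂ)) ⬝ᵥ m) := by
      intro s t m
      simp only [addInt, dotProduct, Finset.mul_sum, ← Finset.sum_add_distrib, Pi.smul_apply,
        smul_eq_mul]
      refine Finset.sum_congr rfl fun i _ => ?_
      push_cast
      simp
      ring
    have hshift := sum_phase_shift hsymm heven hN hAB hBeven hu hdet y
    have hfac : ∀ r : Fin n → ZMod d, cexp (Real.pi * Complex.I * ((b / d) *
        bilin A (fun i => h i / N + (r i).val) (fun i => h i / N + (r i).val))) *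
      gaussian B (-1 / (N * σ))
          (fun i => ((d : ℂ) • l) i / σ + 2 * Real.pi * Complex.I * x r i) (addInt 0 y) =
      cexp (Real.pi * Complex.I * (-1 / (N * τ)) *
        bilin B (fun i => (y i : ℂ)) (fun i => (y i : ℂ)) + j / τ * (l ⬝ᵥ fun i => (y i : ℂ))) *
      cexp (Real.pi * Complex.I * (
      (b / d) * bilin A (fun i => h i / N + (r i).val) (fun i => h i / N + (r i).val) +
      2 * ((fun i => (y i : ℂ)) ⬝ᵥ fun i => h i / N + ((r i).val : ℂ)) / d -
      c / d * bilin B (fun i => (y i : ℂ)) (fun i => (y i : ℂ)))) := by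
      intro r
      rw [gaussian, hquad, hlin, ← Complex.exp_add, ← Complex.exp_add]
      congr 1
      have h1 : (fun i => (x r i : ℂ)) = (d : ℂ)⁻¹ • fun i => h i / N + ((r i).val : ℂ) := by
        ext i
        simp [hx, -ZMod.natCast_val]
        field_simp
      have h2 : (-1 : ℂ) / (N * σ) = -1 / (N * τ) - c / d := by
        have : σ = d * τ / j := by
          field_simp
          exact hσj
        rw [this]
        field_simp
        rw [hj]
        ring
      have h3 : (d : ℂ) / σ = j / τ := by
        field_simp
        linear_combination -hσj
      rw [h1, h2, h3, dotProduct_smul, smul_eq_mul]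
      field_simp
      ring
    simp_rw [hfac]
    rw [← Finset.mul_sum, hshift, gaussian, hquad, hlin j τ]
    have h4 : (fun i => ((((a * h i : ℤ) / N : ℝ)) : ℂ)) = (a : ℂ) • fun i => (h i / N : ℂ) := by
      ext i
      simp
      ring
    have h5 : ∀ s t m : ℂ, s + (t + 2 * Real.pi * Complex.I * (a * m)) =
        s + t + Real.pi * Complex.I * (2 * a * m) := fun s t m => by ring
    rw [h4, dotProduct_smul, smul_eq_mul, h5, Complex.exp_add _ (Real.pi * Complex.I * _)]
    ring
  rw [tsum_eq_sum_tsum_residues d (summable_addInt hC _), hinv τ hτ]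
  simp_rw [hterm, tsum_mul_left, hinv σ hσim]
  have hswap : ∀ (φ : (Fin n → ZMod d) → ℂ) (q : ℂ) (g : (Fin n → ZMod d) → (Fin n → ℤ) → ℂ),
      (∀ r, Summable (g r)) → ∑ r, φ r * (q * ∑' y, g r y) = q * ∑' y, ∑ r, φ r * g r y := by
    intro φ q g hg
    rw [Summable.tsum_finsetSum fun r _ => (hg r).mul_left _, Finset.mul_sum]
    refine Finset.sum_congr rfl fun r _ => ?_
    rw [tsum_mul_left]
    ring
  rw [hswap _ _ _ fun r => hsumB _]
  simp_rw [hK]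
  rw [tsum_mul_left]
  have h1 : Complex.I / σ = Complex.I / τ * j / d := by
    field_simp
    linear_combination -hσj
  have h2 : cexp (((d : ℂ) • l) ⬝ᵥ (A.map Int.cast).mulVec ((d : ℂ) • l) * Complex.I /
      (4 * Real.pi * σ)) = cexp (-Complex.I * (N * c) * j / (4 * Real.pi) * bilin A l l) *
      cexp ((j • l) ⬝ᵥ (A.map Int.cast).mulVec (j • l) * Complex.I / (4 * Real.pi * τ)) := by
    rw [← Complex.exp_add]
    congr 1
    have h3 : ∀ s : ℂ, (s • l) ⬝ᵥ (A.map (Int.cast : ℤ → ℂ)).mulVec (s • l) = s ^ 2 * bilin A l l := by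
      intro s
      change bilin A (s • l) (s • l) = _
      rw [bilin_smul_left, bilin_smul_right]
      ring
    have h4 : σ = d * τ / j := by
      field_simp
      exact hσj
    rw [h3, h3, h4]
    field_simp
    rw [hj]
    ring
  rw [h1, h2, div_pow, mul_pow]
  ring

end Transformation

section PowerSeries

theorem hasSum_tsum_mul_cexp {ι : Type*} {E L : ι → ℂ}
    (hs : ∀ R : ℝ, Summable fun z => ‖E z‖ * Real.exp (R * ‖L z‖)) (s : ℂ) :
    HasSum (fun ν : ℕ => ((∑' z, E z * L z ^ ν) / ν.factorial) * s ^ ν)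
      (∑' z, E z * cexp (s * L z)) := by
  have hexp : ∀ w : ℂ, HasSum (fun ν : ℕ => w ^ ν / ν.factorial) (cexp w) := fun w => by
    rw [Complex.exp_eq_exp_ℂ]
    simpa [div_eq_inv_mul] using NormedSpace.exp_series_hasSum_exp' (𝕂 := ℂ) w
  have hrexp : ∀ w : ℝ, HasSum (fun ν : ℕ => w ^ ν / ν.factorial) (Real.exp w) := fun w => by
    rw [Real.exp_eq_exp_ℝ]
    simpa [div_eq_inv_mul] using NormedSpace.exp_series_hasSum_exp' (𝕂 := ℝ) w
  have hsum : Summable fun p : ι × ℕ => E p.1 * ((s * L p.1) ^ p.2 / p.2.factorial) := by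
    refine Summable.of_norm ?_
    rw [summable_prod_of_nonneg fun _ => norm_nonneg _]
    have hz : ∀ z, HasSum (fun ν : ℕ => ‖E z * ((s * L z) ^ ν / ν.factorial)‖)
        (‖E z‖ * Real.exp (‖s‖ * ‖L z‖)) := by
      intro z
      simpa [mul_pow] using (hrexp (‖s‖ * ‖L z‖)).mul_left ‖E z‖
    refine ⟨fun z => (hz z).summable, (hs ‖s‖).congr fun z => ((hz z).tsum_eq).symm⟩
  have h1 : HasSum (fun ν : ℕ => ∑' z, E z * ((s * L z) ^ ν / ν.factorial))
      (∑' z, E z * cexp (s * L z)) := by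
    have h2 := hsum.prod_symm.prod.hasSum
    have h3 : ∑' (ν : ℕ) (z : ι), E z * ((s * L z) ^ ν / ν.factorial) =
        ∑' (z : ι) (ν : ℕ), E z * ((s * L z) ^ ν / ν.factorial) :=
      Summable.tsum_comm (f := fun z (ν : ℕ) => E z * ((s * L z) ^ ν / ν.factorial)) hsum
    simp only [Prod.swap_prod_mk] at h2
    rw [h3] at h2
    simpa [tsum_mul_left, (hexp _).tsum_eq] using h2
  convert h1 using 2 with ν
  rw [div_mul_eq_mul_div, ← tsum_mul_right, ← tsum_div_const]
  refine tsum_congr fun z => ?_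
  rw [mul_pow]
  ring

theorem hasFPowerSeriesAt_ofScalars_of_hasSum {c : ℕ → ℂ} {F : ℂ → ℂ}
    (h : ∀ s, HasSum (fun ν => c ν * s ^ ν) (F s)) :
    HasFPowerSeriesAt F (FormalMultilinearSeries.ofScalars ℂ c) 0 := by
  rw [hasFPowerSeriesAt_iff]
  refine Filter.Eventually.of_forall fun s => ?_
  simpa [FormalMultilinearSeries.coeff_ofScalars, mul_comm] using h s

theorem coeff_unique {c c' : ℕ → ℂ} {F : ℂ → ℂ} (h : ∀ s, HasSum (fun ν => c ν * s ^ ν) (F s))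
    (h' : ∀ s, HasSum (fun ν => c' ν * s ^ ν) (F s)) : c = c' := by
  have := (hasFPowerSeriesAt_ofScalars_of_hasSum h).eq_formalMultilinearSeries
    (hasFPowerSeriesAt_ofScalars_of_hasSum h')
  ext ν
  have h2 := congrArg (fun p : FormalMultilinearSeries ℂ ℂ ℂ => p.coeff ν) this
  simpa [FormalMultilinearSeries.coeff_ofScalars] using h2

theorem hasDerivAt_zero_of_hasSum {c : ℕ → ℂ} {F : ℂ → ℂ}
    (h : ∀ s, HasSum (fun ν => c ν * s ^ ν) (F s)) : HasDerivAt F (c 1) 0 := by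
  simpa [FormalMultilinearSeries.coeff_ofScalars] using
    (hasFPowerSeriesAt_ofScalars_of_hasSum h).hasDerivAt

end PowerSeries

section Coefficients

variable {n : ℕ} {A : Matrix (Fin n) (Fin n) ℤ}

/-- The factor `exp (π i τ ᵗv A v)` at the lattice translate `v = x + z`. -/
noncomputable def thetaExp (A : Matrix (Fin n) (Fin n) ℤ) (τ : ℂ) (x : Fin n → ℝ)
    (z : Fin n → ℤ) : ℂ :=
  cexp (Real.pi * Complex.I * τ *
    bilin A (fun i => (addInt x z i : ℂ)) (fun i => (addInt x z i : ℂ)))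

theorem summable_thetaExp_mul_exp (hsymm : A.IsSymm)
    (hpos : ∀ x : Fin n → ℤ, x ≠ 0 → 0 < x ⬝ᵥ A.mulVec x) {τ : ℂ} (hτ : 0 < τ.im)
    (x : Fin n → ℝ) (l : Fin n → ℂ) (R : ℝ) :
    Summable fun z => ‖thetaExp A τ x z‖ *
      Real.exp (R * ‖bilin A l (fun i => (addInt x z i : ℂ))‖) := by
  set K : ℝ := ∑ i, ‖(A.map (Int.cast : ℤ → ℂ)).mulVec l i‖ with hK
  obtain ⟨C, hC0, hC⟩ := exists_gaussian_bound hsymm hpos (mul_pos Real.pi_pos hτ) (|R| * K)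
  have hC' : ∀ v : Fin n → ℝ, ‖Real.exp (-(Real.pi * τ.im) *
      (v ⬝ᵥ (A.map (Int.cast : ℤ → ℝ)).mulVec v) + |R| * K * ∑ i, |v i|)‖ ≤
      C * Real.exp (-∑ i, |v i|) := fun v => by
    rw [Real.norm_eq_abs, abs_of_pos (Real.exp_pos _)]
    exact hC v
  have hC'' : ∀ v : Fin n → ℝ, ‖((Real.exp (-(Real.pi * τ.im) *
      (v ⬝ᵥ (A.map (Int.cast : ℤ → ℝ)).mulVec v) + |R| * K * ∑ i, |v i|) : ℝ) : ℂ)‖ ≤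
      C * Real.exp (-∑ i, |v i|) := fun v => by
    rw [Complex.norm_real]
    exact hC' v
  refine Summable.of_nonneg_of_le (fun z => by positivity) (fun z => ?_)
    (Complex.summable_ofReal.mp (summable_addInt hC'' x))
  set v := addInt x z with hv
  have h1 : bilin A (fun i => (v i : ℂ)) (fun i => (v i : ℂ)) =
      ((v ⬝ᵥ (A.map (Int.cast : ℤ → ℝ)).mulVec v : ℝ) : ℂ) := by
    simp [bilin, mulVec, dotProduct]
  have h2 : ‖bilin A l (fun i => (v i : ℂ))‖ ≤ K * ∑ i, |v i| := by
    rw [bilin_comm hsymm, bilin, dotProduct, Finset.mul_sum]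
    refine (norm_sum_le _ _).trans (Finset.sum_le_sum fun i _ => ?_)
    rw [norm_mul, Complex.norm_real, Real.norm_eq_abs, mul_comm]
    exact mul_le_mul_of_nonneg_right
      (Finset.single_le_sum (f := fun i => ‖(A.map (Int.cast : ℤ → ℂ)).mulVec l i‖)
        (fun _ _ => norm_nonneg _) (Finset.mem_univ i)) (abs_nonneg _)
  rw [thetaExp, ← hv, h1, Complex.norm_exp, ← Real.exp_add, Real.exp_le_exp]
  refine add_le_add (le_of_eq (by simp [Complex.mul_re])) ?_
  calc R * ‖bilin A l (fun i => (v i : ℂ))‖ ≤ |R| * ‖bilin A l (fun i => (v i : ℂ))‖ :=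
        mul_le_mul_of_nonneg_right (le_abs_self R) (norm_nonneg _)
    _ ≤ |R| * (K * ∑ i, |v i|) := mul_le_mul_of_nonneg_left h2 (abs_nonneg R)
    _ = _ := by ring

theorem summable_thetaExp_mul_pow (hsymm : A.IsSymm)
    (hpos : ∀ x : Fin n → ℤ, x ≠ 0 → 0 < x ⬝ᵥ A.mulVec x) {τ : ℂ} (hτ : 0 < τ.im)
    (x : Fin n → ℝ) (l : Fin n → ℂ) (ν : ℕ) :
    Summable fun z => thetaExp A τ x z * bilin A l (fun i => (addInt x z i : ℂ)) ^ ν := by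
  refine Summable.of_norm_bounded
    ((summable_thetaExp_mul_exp hsymm hpos hτ x l 1).mul_left (ν.factorial : ℝ)) fun z => ?_
  rw [norm_mul, norm_pow, one_mul, mul_left_comm]
  refine mul_le_mul_of_nonneg_left ?_ (norm_nonneg _)
  have h := Real.pow_div_factorial_le_exp _ (norm_nonneg (bilin A l fun i => (addInt x z i : ℂ))) ν
  rwa [div_le_iff₀' (by positivity)] at h

theorem hasSum_thetaExp (hsymm : A.IsSymm)
    (hpos : ∀ x : Fin n → ℤ, x ≠ 0 → 0 < x ⬝ᵥ A.mulVec x) {τ : ℂ} (hτ : 0 < τ.im)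
    (x : Fin n → ℝ) (l : Fin n → ℂ) (s : ℂ) :
    HasSum (fun ν : ℕ => ((∑' z, thetaExp A τ x z * bilin A l (fun i => (addInt x z i : ℂ)) ^ ν) /
      ν.factorial) * s ^ ν)
      (∑' z, gaussian A τ ((A.map Int.cast).mulVec (s • l)) (addInt x z)) := by
  convert hasSum_tsum_mul_cexp (summable_thetaExp_mul_exp hsymm hpos hτ x l) s using 1
  refine tsum_congr fun z => ?_
  rw [gaussian_eq_bilin hsymm, thetaExp, Complex.exp_add, bilin_smul_left]

theorem tsum_thetaExp_transform {B : Matrix (Fin n) (Fin n) ℤ} {N k : ℕ} (hsymm : A.IsSymm)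
    (hpos : ∀ x : Fin n → ℤ, x ≠ 0 → 0 < x ⬝ᵥ A.mulVec x) (hk : n = k + k)
    (heven : ∀ i, 2 ∣ A i i) (hN : 0 < N) (hAB : A * B = (N : ℤ) • 1) (hBeven : ∀ i, 2 ∣ B i i)
    {h u : Fin n → ℤ} (hu : A.mulVec h = (N : ℤ) • u) {a b c : ℤ} {d : ℕ} [NeZero d]
    (hdet : a * d - b * (N * c) = 1) {τ τ₁ : ℂ} (hτ : 0 < τ.im) (hτ₁ : 0 < τ₁.im)
    (hττ : τ₁ * (N * c * τ + d) = a * τ + b) (l : Fin n → ℂ) (ν : ℕ)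
    (hν : ν ≤ 1 ∨ bilin A l l = 0) :
    ∑' z, thetaExp A τ₁ (fun i => h i / N) z *
      bilin A l (fun i => (addInt (fun i => (h i : ℝ) / N) z i : ℂ)) ^ ν =
      formGaussSum A b d / d ^ k *
      cexp (Real.pi * Complex.I * (a * b * bilin A (fun i => (h i / N : ℂ)) fun i => (h i / N : ℂ)))
      * (N * c * τ + d) ^ (k + ν) *
      ∑' z, thetaExp A τ (fun i => (a * h i : ℤ) / N) z *
        bilin A l (fun i => (addInt (fun i => ((a * h i : ℤ) : ℝ) / N) z i : ℂ)) ^ ν := by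
  set j : ℂ := N * c * τ + d with hj
  set K : ℂ := formGaussSum A b d / d ^ k *
      cexp (Real.pi * Complex.I * (a * b * bilin A (fun i => (h i / N : ℂ)) fun i => (h i / N : ℂ)))
      * j ^ k with hK
  set ρ : ℂ := -Complex.I * (N * c) * j / (4 * Real.pi) with hρ
  have hF := hasSum_thetaExp hsymm hpos hτ₁ (fun i => h i / N) l
  have hF' := hasSum_thetaExp hsymm hpos hτ (fun i => ((a * h i : ℤ) : ℝ) / N) l
  have htr : ∀ s : ℂ, ∑' z, gaussian A τ₁ ((A.map Int.cast).mulVec (s • l))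
      (addInt (fun i => h i / N) z) = K * cexp (ρ * bilin A l l * s ^ 2) *
      ∑' z, gaussian A τ ((A.map Int.cast).mulVec ((j * s) • l))
        (addInt (fun i => ((a * h i : ℤ) : ℝ) / N) z) := by
    intro s
    rw [tsum_gaussian_transform hsymm hpos hk heven hN hAB hBeven hu hdet hτ hτ₁ hττ,
      bilin_smul_left, bilin_smul_right, smul_smul]
    congr 3
    ring
  rw [pow_add, ← mul_assoc, ← hK]
  rcases hν with hν | hw
  · interval_cases ν
    · have h0 := htr 0
      simp only [gaussian_eq_bilin hsymm, mul_zero, bilin_smul_left, zero_mul, add_zero,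
        Complex.exp_zero, mul_one, ne_eq, OfNat.ofNat_ne_zero, not_false_eq_true, zero_pow] at h0
      simpa only [pow_zero, mul_one, thetaExp] using h0
    · have h1 := hasDerivAt_zero_of_hasSum hF
      have h2 := hasDerivAt_zero_of_hasSum hF'
      have h3 : HasDerivAt (fun s : ℂ => K * cexp (ρ * bilin A l l * s ^ 2) *
          ∑' z, gaussian A τ ((A.map Int.cast).mulVec ((j * s) • l))
            (addInt (fun i => ((a * h i : ℤ) : ℝ) / N) z)) (K * (j *
          ∑' z, thetaExp A τ (fun i => (a * h i : ℤ) / N) z *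
          bilin A l (fun i => (addInt (fun i => ((a * h i : ℤ) : ℝ) / N) z i : ℂ)) ^ 1)) 0 := by
        have h4 : HasDerivAt (fun s : ℂ => K * cexp (ρ * bilin A l l * s ^ 2)) 0 0 := by
          have h5 := (((hasDerivAt_pow 2 (0 : ℂ)).const_mul (ρ * bilin A l l)).cexp).const_mul K
          simpa using h5
        have h6 : HasDerivAt (fun s : ℂ => j * s) j 0 := by
          simpa using (hasDerivAt_id (0 : ℂ)).const_mul j
        have h7 := h4.mul (HasDerivAt.comp (0 : ℂ) (h₂ := fun s : ℂ =>
          ∑' z, gaussian A τ ((A.map Int.cast).mulVec (s • l))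
            (addInt (fun i => ((a * h i : ℤ) : ℝ) / N) z)) (by rw [mul_zero]; exact h2) h6)
        refine h7.congr_deriv ?_
        rw [zero_mul, zero_add, zero_pow two_ne_zero, mul_zero, Complex.exp_zero, mul_one,
          Nat.factorial_one, Nat.cast_one, div_one, mul_comm j]
      have h8 := h1.unique (h3.congr_of_eventuallyEq (Filter.Eventually.of_forall htr))
      simp only [Nat.factorial_one, Nat.cast_one, div_one] at h8
      rw [h8]
      ring
  · have h1 : ∀ s : ℂ, HasSum (fun ν : ℕ => (K * (j ^ ν *
        ((∑' z, thetaExp A τ (fun i => (a * h i : ℤ) / N) z *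
        bilin A l (fun i => (addInt (fun i => ((a * h i : ℤ) : ℝ) / N) z i : ℂ)) ^ ν) /
        ν.factorial))) * s ^ ν) (∑' z, gaussian A τ₁ ((A.map Int.cast).mulVec (s • l))
      (addInt (fun i => h i / N) z)) := by
      intro s
      rw [htr, hw]
      simp only [mul_zero, zero_mul, Complex.exp_zero, mul_one]
      refine ((hF' (j * s)).mul_left K).congr_fun fun ν => ?_
      rw [mul_pow]
      ring
    have h2 := congrFun (coeff_unique hF h1) ν
    have h3 : (ν.factorial : ℂ) ≠ 0 := by exact_mod_cast ν.factorial_ne_zero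
    field_simp at h2
    rw [h2]

end Coefficients

section Theta

variable {n : ℕ} {A B : Matrix (Fin n) (Fin n) ℤ} {N : ℕ}

theorem sphericalLin_eq_bilin (l : Fin n → ℂ) (x : Fin n → ℤ) :
    sphericalLin A l x = bilin A l (fun i => (x i : ℂ)) := by
  simp [sphericalLin, bilin, dotProduct, mulVec, Finset.mul_sum, mul_assoc]

theorem IsSpherical.exists_sum_pow {ν : ℕ} {P : (Fin n → ℤ) → ℂ} (hP : IsSpherical A ν P) :
    ∃ (m : ℕ) (c : Fin m → ℂ) (l : Fin m → Fin n → ℂ),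
      (∀ t, ν ≤ 1 ∨ bilin A (l t) (l t) = 0) ∧
      P = fun x => ∑ t, c t * bilin A (l t) (fun i => (x i : ℂ)) ^ ν := by
  rcases hP with ⟨rfl, c, rfl⟩ | ⟨rfl, l, rfl⟩ | ⟨-, m, c, l, hl, rfl⟩
  · exact ⟨1, fun _ => c, 0, fun _ => Or.inl zero_le_one, by simp⟩
  · exact ⟨1, fun _ => 1, fun _ => l, fun _ => Or.inl le_rfl, by simp [sphericalLin_eq_bilin]⟩
  · refine ⟨m, c, l, fun t => Or.inr ?_, by simp [sphericalLin_eq_bilin]⟩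
    rw [← hl t]
    simp [bilin, dotProduct, mulVec, Finset.mul_sum, mul_assoc]

/-- The theta series `θ(τ; h, A, N, P)`. -/
noncomputable def thetaSum (A : Matrix (Fin n) (Fin n) ℤ) (N : ℕ) (P : (Fin n → ℤ) → ℂ)
    (h : Fin n → ℤ) (τ : ℂ) : ℂ :=
  ∑' x : {x : Fin n → ℤ // ∀ i, (N : ℤ) ∣ (x i - h i)},
    P x * Complex.exp (2 * (Real.pi : ℂ) * Complex.I *
      (((x : Fin n → ℤ) ⬝ᵥ A.mulVec (x : Fin n → ℤ) : ℤ) : ℂ) * τ / (2 * (N : ℂ) ^ 2))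

theorem thetaSum_congr (P : (Fin n → ℤ) → ℂ) {h h' : Fin n → ℤ}
    (hh : ∀ i, (N : ℤ) ∣ h i - h' i) (τ : ℂ) : thetaSum A N P h τ = thetaSum A N P h' τ := by
  have : (fun x : Fin n → ℤ => ∀ i, (N : ℤ) ∣ (x i - h i)) = fun x => ∀ i, (N : ℤ) ∣ (x i - h' i) := by
    ext x
    refine forall_congr' fun i => ?_
    rw [← dvd_add_left (hh i), sub_add_sub_cancel]
  unfold thetaSum
  simp only [funext_iff, eq_iff_iff] at this
  exact (Equiv.subtypeEquivRight this).tsum_eq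
    (fun x : {x : Fin n → ℤ // ∀ i, (N : ℤ) ∣ (x i - h' i)} => P x * Complex.exp (2 * (Real.pi : ℂ) *
      Complex.I * (((x : Fin n → ℤ) ⬝ᵥ A.mulVec (x : Fin n → ℤ) : ℤ) : ℂ) * τ / (2 * (N : ℂ) ^ 2)))

/-- The parametrization `z ↦ h + N z` of the residue class of `h` modulo `N`. -/
def residueClassEquiv (hN : 0 < N) (h : Fin n → ℤ) :
    (Fin n → ℤ) ≃ {x : Fin n → ℤ // ∀ i, (N : ℤ) ∣ (x i - h i)} where
  toFun z := ⟨fun i => h i + N * z i, fun i => by simp⟩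
  invFun x := fun i => (x.1 i - h i) / N
  left_inv z := by
    ext i
    simp [hN.ne']
  right_inv x := by
    ext i
    simp [Int.mul_ediv_cancel' (x.2 i)]

theorem thetaSum_eq_tsum (hN : 0 < N) (P : (Fin n → ℤ) → ℂ) (h : Fin n → ℤ) (τ : ℂ) :
    thetaSum A N P h τ =
      ∑' z, P (fun i => h i + N * z i) * thetaExp A τ (fun i => h i / N) z := by
  have hN0 : (N : ℂ) ≠ 0 := by exact_mod_cast hN.ne'
  rw [thetaSum, ← (residueClassEquiv hN h).tsum_eq]
  refine tsum_congr fun z => ?_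
  change P (fun i => h i + N * z i) * _ = _
  rw [thetaExp]
  congr 2
  rw [← bilin_intCast]
  have h1 : (fun i => (((residueClassEquiv hN h z : Fin n → ℤ) i : ℤ) : ℂ)) =
      (N : ℂ) • fun i => (addInt (fun i => (h i : ℝ) / N) z i : ℂ) := by
    ext i
    simp [residueClassEquiv, addInt]
    field_simp
  rw [h1, bilin_smul_left, bilin_smul_right]
  field_simp

theorem thetaSum_sum_pow (hsymm : A.IsSymm)
    (hpos : ∀ x : Fin n → ℤ, x ≠ 0 → 0 < x ⬝ᵥ A.mulVec x) (hN : 0 < N) {m : ℕ}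
    (c : Fin m → ℂ) (l : Fin m → Fin n → ℂ) (ν : ℕ) (h : Fin n → ℤ) {τ : ℂ} (hτ : 0 < τ.im) :
    thetaSum A N (fun x => ∑ t, c t * bilin A (l t) (fun i => (x i : ℂ)) ^ ν) h τ =
      ∑ t, c t * (N ^ ν * ∑' z, thetaExp A τ (fun i => h i / N) z *
        bilin A (l t) (fun i => (addInt (fun i => (h i : ℝ) / N) z i : ℂ)) ^ ν) := by
  have hN0 : (N : ℂ) ≠ 0 := by exact_mod_cast hN.ne'
  rw [thetaSum_eq_tsum hN]
  have h1 : ∀ z : Fin n → ℤ, (fun i => ((h i + N * z i : ℤ) : ℂ)) =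
      (N : ℂ) • fun i => (addInt (fun i => (h i : ℝ) / N) z i : ℂ) := by
    intro z
    ext i
    simp [addInt]
    field_simp
  simp_rw [h1, bilin_smul_right, mul_pow, ← tsum_mul_left]
  rw [← Summable.tsum_finsetSum fun t _ =>
    ((summable_thetaExp_mul_pow hsymm hpos hτ _ (l t) ν).mul_left _).mul_left _]
  refine tsum_congr fun z => ?_
  rw [Finset.sum_mul]
  refine Finset.sum_congr rfl fun t _ => ?_
  ring

theorem exists_form_eq_two_mul (hsymm : A.IsSymm) (hN : 0 < N) (hAB : A * B = (N : ℤ) • 1)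
    (hBeven : ∀ i, 2 ∣ B i i) {h : Fin n → ℤ} (hh : ∀ i, (N : ℤ) ∣ A.mulVec h i) :
    ∃ f : ℤ, h ⬝ᵥ A.mulVec h = 2 * N * f := by
  choose u hu using hh
  have hu' : A.mulVec h = (N : ℤ) • u := funext hu
  have hBu : B.mulVec u = h := by
    have h1 : (N : ℤ) • B.mulVec u = (N : ℤ) • h := by
      rw [← mulVec_smul, ← hu', mulVec_mulVec, mul_comm_of_mul_eq_smul_one hN hAB, smul_mulVec,
        one_mulVec]
    exact smul_right_injective _ (by exact_mod_cast hN.ne' : (N : ℤ) ≠ 0) h1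
  obtain ⟨f, hf⟩ := even_form (isSymm_of_mul_eq_smul_one hsymm hN hAB) hBeven u
  refine ⟨f, ?_⟩
  rw [hu', dotProduct_smul, dotProduct_comm, ← hBu, hf, smul_eq_mul]
  ring

/-- The transformation law of all theta series with the given `A`, `N`, `P` under `γ`, with
multiplier `ε`. -/
def ThetaTransforms (A : Matrix (Fin n) (Fin n) ℤ) (N w : ℕ) (P : (Fin n → ℤ) → ℂ) (γ : SL(2, ℤ))
    (ε : ℂ) : Prop :=
  ∀ h : Fin n → ℤ, (∀ i, (N : ℤ) ∣ A.mulVec h i) → ∀ τ : ℍ,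
    thetaSum A N P h ((γ • τ : ℍ) : ℂ) = ε * cexp (2 * (Real.pi : ℂ) * Complex.I *
      ((γ 0 0 : ℂ) * (γ 0 1 : ℂ) * ((h ⬝ᵥ A.mulVec h : ℤ) : ℂ)) / (2 * (N : ℂ) ^ 2)) *
      ((γ 1 0 : ℂ) * (τ : ℂ) + (γ 1 1 : ℂ)) ^ w * thetaSum A N P (fun i => γ 0 0 * h i) τ

theorem thetaTransforms_of_pos {k ν : ℕ} {P : (Fin n → ℤ) → ℂ} (hsymm : A.IsSymm)
    (hpos : ∀ x : Fin n → ℤ, x ≠ 0 → 0 < x ⬝ᵥ A.mulVec x) (hk : n = k + k)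
    (heven : ∀ i, 2 ∣ A i i) (hN : 0 < N) (hAB : A * B = (N : ℤ) • 1) (hBeven : ∀ i, 2 ∣ B i i)
    (hP : IsSpherical A ν P) {γ : SL(2, ℤ)} (hγ : γ ∈ Gamma0 N) {d : ℕ} [NeZero d]
    (hd : γ 1 1 = d) :
    ThetaTransforms A N (k + ν) P γ (formGaussSum A (γ 0 1) d / d ^ k) := by
  intro h hh τ
  choose u hu using hh
  have hN0 : (N : ℂ) ≠ 0 := by exact_mod_cast hN.ne'
  obtain ⟨c, hc⟩ := (ZMod.intCast_zmod_eq_zero_iff_dvd _ _).mp (Gamma0_mem.mp hγ)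
  have hdet : γ 0 0 * d - γ 0 1 * (N * c) = 1 := by
    have := γ.det_coe
    rw [Matrix.det_fin_two] at this
    rw [← hc, ← hd]
    exact this
  obtain ⟨m, cf, l, hl, rfl⟩ := hP.exists_sum_pow
  have hj : ((γ 1 0 : ℤ) : ℂ) * (τ : ℂ) + ((γ 1 1 : ℤ) : ℂ) = N * c * τ + d := by
    rw [hc, hd]
    push_cast
    ring
  have hj0 : (N * c * τ + d : ℂ) ≠ 0 := by
    rw [← hj]
    exact_mod_cast UpperHalfPlane.denom_ne_zero γ τ
  have hττ : ((γ • τ : ℍ) : ℂ) * (N * c * τ + d) = (γ 0 0 : ℤ) * τ + (γ 0 1 : ℤ) := by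
    rw [coe_specialLinearGroup_apply]
    simp only [algebraMap_int_eq, eq_intCast, Complex.ofReal_intCast]
    rw [hj]
    exact div_mul_cancel₀ _ hj0
  rw [thetaSum_sum_pow hsymm hpos hN _ _ _ _ (γ • τ).im_pos,
    thetaSum_sum_pow hsymm hpos hN _ _ _ _ τ.im_pos, hj, Finset.mul_sum]
  refine Finset.sum_congr rfl fun t _ => ?_
  rw [tsum_thetaExp_transform hsymm hpos hk heven hN hAB hBeven (funext hu) hdet τ.im_pos
    (γ • τ).im_pos hττ (l t) ν (hl t)]
  have e1 : bilin A (fun i => (h i / N : ℂ)) (fun i => (h i / N : ℂ)) =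
      ((h ⬝ᵥ A.mulVec h : ℤ) : ℂ) / N ^ 2 := by
    have : (fun i => (h i / N : ℂ)) = (N : ℂ)⁻¹ • fun i => (h i : ℂ) := by
      ext i
      simp
      ring
    rw [this, bilin_smul_left, bilin_smul_right, bilin_intCast]
    field_simp
  have e2 : Real.pi * Complex.I * (γ 0 0 * γ 0 1 * (((h ⬝ᵥ A.mulVec h : ℤ) : ℂ) / N ^ 2)) =
      2 * (Real.pi : ℂ) * Complex.I *
      ((γ 0 0 : ℂ) * (γ 0 1 : ℂ) * ((h ⬝ᵥ A.mulVec h : ℤ) : ℂ)) / (2 * (N : ℂ) ^ 2) := by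
    field_simp
  rw [e1, e2]
  ring

theorem ThetaTransforms.mul {w : ℕ} {P : (Fin n → ℤ) → ℂ} (hsymm : A.IsSymm) (hN : 0 < N)
    (hAB : A * B = (N : ℤ) • 1) (hBeven : ∀ i, 2 ∣ B i i) {γ γ' : SL(2, ℤ)} {ε ε' : ℂ}
    (hγ' : γ' ∈ Gamma0 N) (h₁ : ThetaTransforms A N w P γ ε) (h₂ : ThetaTransforms A N w P γ' ε') :
    ThetaTransforms A N w P (γ * γ') (ε * ε') := by
  intro h hh τ
  have hN0 : (N : ℂ) ≠ 0 := by exact_mod_cast hN.ne'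
  obtain ⟨f, hf⟩ := exists_form_eq_two_mul hsymm hN hAB hBeven hh
  obtain ⟨c, hc⟩ := (ZMod.intCast_zmod_eq_zero_iff_dvd _ _).mp (Gamma0_mem.mp hγ')
  have hdet : (γ' 0 0 : ℂ) * γ' 1 1 - γ' 0 1 * γ' 1 0 = 1 := by
    have := γ'.det_coe
    rw [Matrix.det_fin_two] at this
    exact_mod_cast this
  have hmul : ∀ i j, (γ * γ') i j = γ i 0 * γ' 0 j + γ i 1 * γ' 1 j := fun i j => by
    simp [Matrix.mul_apply, Fin.sum_univ_two]
  have hh' : ∀ i, (N : ℤ) ∣ A.mulVec (fun i => γ 0 0 * h i) i := fun i => by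
    have : (fun i => γ 0 0 * h i) = γ 0 0 • h := rfl
    rw [this, mulVec_smul]
    exact (hh i).mul_left _
  have hq : (fun i => γ 0 0 * h i) ⬝ᵥ A.mulVec (fun i => γ 0 0 * h i) =
      γ 0 0 ^ 2 * (h ⬝ᵥ A.mulVec h) := by
    have : (fun i => γ 0 0 * h i) = γ 0 0 • h := rfl
    rw [this, mulVec_smul, smul_dotProduct, dotProduct_smul, smul_eq_mul, smul_eq_mul]
    ring
  have hth : thetaSum A N P (fun i => γ' 0 0 * (γ 0 0 * h i)) τ =
      thetaSum A N P (fun i => (γ * γ') 0 0 * h i) τ := by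
    refine thetaSum_congr P (fun i => ⟨-(γ 0 1 * c * h i), ?_⟩) _
    rw [hmul, hc]
    ring
  have hj0 : ((γ' 1 0 : ℤ) : ℂ) * (τ : ℂ) + ((γ' 1 1 : ℤ) : ℂ) ≠ 0 := by
    exact_mod_cast UpperHalfPlane.denom_ne_zero γ' τ
  have hcoc : (((γ * γ') 1 0 : ℤ) : ℂ) * τ + (((γ * γ') 1 1 : ℤ) : ℂ) =
      ((γ 1 0 : ℤ) * ((γ' • τ : ℍ) : ℂ) + (γ 1 1 : ℤ)) * ((γ' 1 0 : ℤ) * τ + (γ' 1 1 : ℤ)) := by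
    rw [coe_specialLinearGroup_apply, hmul, hmul]
    simp only [algebraMap_int_eq, eq_intCast, Complex.ofReal_intCast]
    push_cast
    field_simp
    ring
  have hexp : cexp (2 * (Real.pi : ℂ) * Complex.I *
      (((γ * γ') 0 0 : ℂ) * ((γ * γ') 0 1 : ℂ) * ((h ⬝ᵥ A.mulVec h : ℤ) : ℂ)) / (2 * (N : ℂ) ^ 2)) =
      cexp (2 * (Real.pi : ℂ) * Complex.I *
      ((γ 0 0 : ℂ) * (γ 0 1 : ℂ) * ((h ⬝ᵥ A.mulVec h : ℤ) : ℂ)) / (2 * (N : ℂ) ^ 2)) *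
      cexp (2 * (Real.pi : ℂ) * Complex.I *
      ((γ' 0 0 : ℂ) * (γ' 0 1 : ℂ) * ((γ 0 0 ^ 2 * (h ⬝ᵥ A.mulVec h) : ℤ) : ℂ)) /
        (2 * (N : ℂ) ^ 2)) := by
    rw [← Complex.exp_add]
    refine cexp_eq_cexp_of_int (c * f * (2 * γ 0 0 * γ 0 1 * γ' 0 1 + γ 0 1 ^ 2 * γ' 1 1)) ?_
    have hc' : ((γ' 1 0 : ℤ) : ℂ) = N * c := by
      rw [hc]
      push_cast
      ring
    rw [hc'] at hdet
    rw [hmul, hmul, hf]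
    push_cast
    rw [hc']
    field_simp
    linear_combination (f * γ 0 0 * γ 0 1 : ℂ) * hdet
  rw [mul_smul, h₁ h hh, h₂ _ hh', hq, hth, hcoc, hexp, mul_pow]
  ring

end Theta

section GaussSum

theorem exists_transpose_mul_mul_eq_diagonal {K : Type*} [Field K] (h2 : (2 : K) ≠ 0) {n : ℕ}
    {M : Matrix (Fin n) (Fin n) K} (hM : M.IsSymm) :
    ∃ (C : Matrix (Fin n) (Fin n) K) (w : Fin n → K), IsUnit C.det ∧
      Cᵀ * M * C = Matrix.diagonal w := by
  have := invertibleOfNonzero h2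
  obtain ⟨v', hv'⟩ := LinearMap.BilinForm.exists_orthogonal_basis
    (B := Matrix.toBilin' M) (LinearMap.BilinForm.isSymm_iff.mp (Matrix.isSymm_toBilin'_iff_isSymm.mpr hM))
  let e : Fin (Module.finrank K (Fin n → K)) ≃ Fin n := finCongr (by simp)
  let v := v'.reindex e
  refine ⟨(Pi.basisFun K (Fin n)).toMatrix v, fun i => Matrix.toBilin' M (v i) (v i), ?_, ?_⟩
  · exact (Matrix.isUnit_iff_isUnit_det _).mp
      (@isUnit_of_invertible _ _ _ ((Pi.basisFun K (Fin n)).invertibleToMatrix v))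
  · have h := LinearMap.BilinForm.toMatrix_mul_basis_toMatrix (Pi.basisFun K (Fin n)) v
      (Matrix.toBilin' M)
    rw [LinearMap.BilinForm.toMatrix_basisFun, LinearMap.BilinForm.toMatrix'_toBilin'] at h
    rw [h]
    ext i j
    rw [LinearMap.BilinForm.toMatrix_apply, Matrix.diagonal_apply]
    split_ifs with hij
    · rw [hij]
    · have := hv' (i := e.symm i) (j := e.symm j) (by simpa using hij)
      simpa [v, Function.onFun] using this

variable {p : ℕ} [Fact p.Prime]

/-- The quadratic character of `ZMod p` with complex values. -/
noncomputable def quadraticCharC (p : ℕ) [Fact p.Prime] : MulChar (ZMod p) ℂ :=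
  (quadraticChar (ZMod p)).ringHomComp (Int.castRingHom ℂ)

theorem sum_addChar_mul_sq (hp : p ≠ 2) {ψ : AddChar (ZMod p) ℂ} (hψ : ψ.IsPrimitive)
    {w : ZMod p} (hw : w ≠ 0) :
    ∑ x, ψ (w * x ^ 2) = quadraticCharC p w * gaussSum (quadraticCharC p) ψ := by
  have h1 : ∑ x, ψ (w * x ^ 2) = ∑ t, (quadraticCharC p t + 1) * ψ (w * t) := by
    rw [← Finset.sum_fiberwise Finset.univ (fun x : ZMod p => x ^ 2)]
    refine Finset.sum_congr rfl fun t _ => ?_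
    rw [Finset.sum_congr rfl (g := fun _ => ψ (w * t)) fun x hx => by
      rw [(Finset.mem_filter.mp hx).2], Finset.sum_const, nsmul_eq_mul]
    congr 1
    have := quadraticChar_card_sqrts ((ZMod.ringChar_zmod_n p).substr hp) t
    rw [Set.toFinset_ofPred] at this
    have h2 : ((Finset.card {x : ZMod p | x ^ 2 = t} : ℤ) : ℂ) =
      ((quadraticChar (ZMod p) t + 1 : ℤ) : ℂ) := by rw [this]
    simpa [quadraticCharC] using h2
  have h2 : ∑ t, ψ (w * t) = 0 := by
    simpa using AddChar.sum_eq_zero_of_ne_one (hψ hw)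
  simp_rw [h1, add_mul, Finset.sum_add_distrib, one_mul, h2, add_zero]
  have h3 := gaussSum_mulShift (quadraticCharC p) ψ (Units.mk0 w hw)
  have h4 : quadraticCharC p w * quadraticCharC p w = 1 := by
    rw [← map_mul, ← sq]
    simp [quadraticCharC, quadraticChar_sq_one' hw]
  rw [← h3, Units.val_mk0, ← mul_assoc, h4, one_mul]
  simp [gaussSum]

theorem sum_addChar_quadraticForm (hp : p ≠ 2) {ψ : AddChar (ZMod p) ℂ} (hψ : ψ.IsPrimitive)
    {n : ℕ} {M : Matrix (Fin n) (Fin n) (ZMod p)} (hM : M.IsSymm) (hdet : M.det ≠ 0) :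
    ∑ x : Fin n → ZMod p, ψ (x ⬝ᵥ M.mulVec x) =
      quadraticCharC p M.det * gaussSum (quadraticCharC p) ψ ^ n := by
  have h2 : (2 : ZMod p) ≠ 0 := Ring.two_ne_zero ((ZMod.ringChar_zmod_n p).substr hp)
  obtain ⟨C, w, hC, hw⟩ := exists_transpose_mul_mul_eq_diagonal h2 hM
  have hdw : C.det ^ 2 * M.det = ∏ i, w i := by
    rw [← Matrix.det_diagonal, ← hw, Matrix.det_mul, Matrix.det_mul, Matrix.det_transpose]
    ring
  have hw0 : ∀ i, w i ≠ 0 := by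
    have : ∏ i, w i ≠ 0 := by
      rw [← hdw]
      exact mul_ne_zero (pow_ne_zero _ hC.ne_zero) hdet
    exact fun i => Finset.prod_ne_zero_iff.mp this i (Finset.mem_univ i)
  have hC' := (Matrix.isUnit_iff_isUnit_det C).mpr hC
  have hbij : Function.Bijective C.mulVec :=
    ⟨Matrix.mulVec_injective_iff_isUnit.mpr hC', Matrix.mulVec_surjective_iff_isUnit.mpr hC'⟩
  have hsum : ∀ y : Fin n → ZMod p, ψ (C.mulVec y ⬝ᵥ M.mulVec (C.mulVec y)) =
      ∏ i, ψ (w i * y i ^ 2) := by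
    intro y
    have hprod : ∏ i, ψ (w i * y i ^ 2) = ψ (∑ i, w i * y i ^ 2) := by
      exact (map_prod ψ.toMonoidHom (fun i => Multiplicative.ofAdd (w i * y i ^ 2))
        Finset.univ).symm
    rw [hprod]
    congr 1
    rw [Matrix.dotProduct_mulVec, Matrix.vecMul_mulVec, ← Matrix.dotProduct_mulVec,
      Matrix.mulVec_mulVec, hw]
    simp only [dotProduct, Matrix.mulVec_diagonal]
    exact Finset.sum_congr rfl fun i _ => by ring
  rw [← Function.Bijective.sum_comp hbij (fun x => ψ (x ⬝ᵥ M.mulVec x))]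
  simp_rw [hsum]
  rw [← Fintype.prod_sum (fun i (x : ZMod p) => ψ (w i * x ^ 2))]
  simp_rw [fun i => sum_addChar_mul_sq hp hψ (hw0 i)]
  rw [Finset.prod_mul_distrib, ← map_prod, ← hdw, Finset.prod_const, Finset.card_univ,
    Fintype.card_fin, map_mul]
  congr 1
  simp [quadraticCharC, quadraticChar_sq_one' hC.ne_zero]

theorem formGaussSum_prime {n k : ℕ} {A : Matrix (Fin n) (Fin n) ℤ} (hsymm : A.IsSymm)
    (heven : ∀ i, 2 ∣ A i i) (hk : n = k + k) (hp : p ≠ 2) {b : ℤ} (hb : (b : ZMod p) ≠ 0)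
    (hdet : ((A.det : ℤ) : ZMod p) ≠ 0) :
    formGaussSum A b p = jacobiSym ((-1) ^ k * A.det) p * p ^ k := by
  have h2 : (2 : ZMod p) ≠ 0 := Ring.two_ne_zero ((ZMod.ringChar_zmod_n p).substr hp)
  have hn : n = 2 * k := by lia
  set M : Matrix (Fin n) (Fin n) (ZMod p) := (b / 2 : ZMod p) • A.map (Int.cast : ℤ → ZMod p)
  have hM : M.IsSymm := by
    simp only [M]
    exact (hsymm.map _).smul _
  have hAdet : (A.map (Int.cast : ℤ → ZMod p)).det = ((A.det : ℤ) : ZMod p) :=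
    (Int.cast_det A).symm
  have hMdet : M.det = ((b / 2 : ZMod p) ^ k) ^ 2 * ((A.det : ℤ) : ZMod p) := by
    simp only [M]
    rw [Matrix.det_smul, Fintype.card_fin, hAdet, ← pow_mul, mul_comm k, ← hn]
  have hb2 : (b / 2 : ZMod p) ^ k ≠ 0 := pow_ne_zero _ (div_ne_zero hb h2)
  have hphase : ∀ r : Fin n → ZMod p, phase A b p (fun i => ((r i).val : ℤ)) =
      ZMod.stdAddChar (r ⬝ᵥ M.mulVec r) := by
    intro r
    obtain ⟨f, hf⟩ := even_form hsymm heven (fun i => ((r i).val : ℤ))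
    have : r ⬝ᵥ M.mulVec r = ((b * f : ℤ) : ZMod p) := by
      have h3 := congrArg (Int.cast : ℤ → ZMod p) hf
      simp only [dotProduct, mulVec] at h3
      push_cast at h3
      simp only [ZMod.natCast_val, ZMod.cast_id', id_eq] at h3
      simp only [M, Matrix.smul_mulVec, dotProduct_smul]
      simp only [dotProduct, mulVec, Matrix.map_apply, smul_eq_mul]
      rw [h3]
      push_cast
      field_simp
      ring
    rw [this, ZMod.stdAddChar_coe, phase, hf]
    congr 1
    push_cast
    ring
  have hχ1 : quadraticCharC p ≠ 1 :=
    (MulChar.ringHomComp_ne_one_iff (RingHom.injective_int _)).mpr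
      (quadraticChar_ne_one ((ZMod.ringChar_zmod_n p).substr hp))
  have hχ2 : (quadraticCharC p).IsQuadratic :=
    (quadraticChar_isQuadratic (ZMod p)).comp _
  have hχ : ∀ a : ℤ, quadraticCharC p a = jacobiSym a p := by
    intro a
    rw [← jacobiSym.legendreSym.to_jacobiSym]
    rfl
  rw [formGaussSum]
  simp_rw [hphase]
  rw [sum_addChar_quadraticForm hp (ZMod.isPrimitive_stdAddChar p) hM
    (by rw [hMdet]; exact mul_ne_zero (pow_ne_zero _ hb2) hdet), show gaussSum (quadraticCharC p) ZMod.stdAddChar ^ n = _ from congrArg _ hn, pow_mul,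
    gaussSum_sq hχ1 hχ2 (ZMod.isPrimitive_stdAddChar p), ZMod.card, mul_pow, ← mul_assoc,
    hMdet, ← hχ]
  congr 1
  rw [← map_pow, map_mul]
  have : quadraticCharC p (((b / 2 : ZMod p) ^ k) ^ 2) = 1 := by
    simp [quadraticCharC, quadraticChar_sq_one' hb2]
  rw [this, one_mul, ← map_mul]
  congr 1
  push_cast
  ring

theorem formGaussSum_one {n : ℕ} (A : Matrix (Fin n) (Fin n) ℤ) (b : ℤ) :
    formGaussSum A b 1 = 1 := by
  rw [formGaussSum, Fintype.sum_unique, phase]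
  simp [Subsingleton.elim _ (0 : ZMod 1)]

end GaussSum

section Kronecker

theorem jacobiSym_natCast_four_mul_sub_one {a : ℕ} (ha : 0 < a) :
    jacobiSym a (4 * a - 1) = 1 := by
  have hq : Odd (4 * a - 1) := ⟨2 * a - 1, by lia⟩
  have h : jacobiSym (4 * a) (4 * a - 1) = 1 := by
    rw [jacobiSym.mod_left' (a₂ := 1) (b := 4 * a - 1), jacobiSym.one_left]
    push_cast [show 1 ≤ 4 * a by lia]
    exact Int.ModEq.symm (Int.modEq_iff_dvd.mpr dvd_rfl)
  rwa [jacobiSym.mul_left, jacobiSym.at_four hq, one_mul] at h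

theorem jacobiSym_four_mul_natAbs_sub_one {D : ℤ} (hD : D ≠ 0) :
    jacobiSym D (4 * D.natAbs - 1) = if D < 0 then -1 else 1 := by
  have ha : 0 < D.natAbs := Int.natAbs_pos.mpr hD
  have hq : Odd (4 * D.natAbs - 1) := ⟨2 * D.natAbs - 1, by lia⟩
  have h := jacobiSym_natCast_four_mul_sub_one ha
  split_ifs with h0
  · have hD' : D = -1 * (D.natAbs : ℤ) := by lia
    rw [hD', jacobiSym.mul_left, ← hD', h, mul_one, jacobiSym.at_neg_one hq]
    exact ZMod.χ₄_nat_three_mod_four (by lia)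
  · have hD' : D = (D.natAbs : ℤ) := by lia
    rw [← h, ← hD']

theorem kronecker_of_odd {d : ℤ} (hd : Odd d) (D : ℤ) :
    kronecker D d = (if d < 0 ∧ D < 0 then -1 else 1) * jacobiSym D d.natAbs := by
  have h0 : d ≠ 0 := by
    rintro rfl
    simp at hd
  have h2 : padicValNat 2 d.natAbs = 0 := by
    refine padicValNat.eq_zero_of_not_dvd ?_
    rw [← even_iff_two_dvd, Nat.not_even_iff_odd]
    exact Int.natAbs_odd.mpr hd
  simp [_root_.kronecker, h0, h2]

theorem jacobiSym_congr_right {a : ℤ} {b b' : ℕ} (hb : Odd b) (hb' : Odd b')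
    (h : b ≡ b' [MOD 4 * a.natAbs]) : jacobiSym a b = jacobiSym a b' := by
  rw [jacobiSym.mod_right a hb, jacobiSym.mod_right a hb', h]

theorem jacobiSym_eq_kronecker {D d : ℤ} {p : ℕ} (hD : D ≠ 0) (hd : Odd d)
    (hpd : 4 * D ∣ p - d) : jacobiSym D p = kronecker D d := by
  obtain ⟨t, ht⟩ := hpd
  have hp : Odd p := by
    rw [← Int.odd_coe_nat, show (p : ℤ) = d + 2 * (2 * D * t) by lia]
    exact hd.add_even (even_two_mul _)
  have hdn := Int.natAbs_odd.mpr hd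
  rw [kronecker_of_odd hd]
  have hdvd : ∀ x : ℤ, 4 * D ∣ x → ((4 * D.natAbs : ℕ) : ℤ) ∣ x := by
    intro x hx
    push_cast
    rcases abs_choice D with h | h <;> rw [h]
    · exact hx
    · rwa [mul_neg, neg_dvd]
  rcases lt_or_ge d 0 with h0 | h0
  · have hq : Odd (4 * D.natAbs - 1) := ⟨2 * D.natAbs - 1, by lia⟩
    rw [jacobiSym_congr_right (b' := d.natAbs * (4 * D.natAbs - 1)) hp (hdn.mul hq),
      jacobiSym.mul_right' _ hdn.pos.ne' hq.pos.ne', jacobiSym_four_mul_natAbs_sub_one hD]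
    · simp only [h0, true_and]
      ring
    · rw [Nat.ModEq.comm, ← Int.natCast_modEq_iff, Int.modEq_iff_dvd]
      have h1 : ((4 * D.natAbs : ℕ) : ℤ) ∣ p - d := hdvd _ ⟨t, ht⟩
      have h2 : ((d.natAbs * (4 * D.natAbs - 1) : ℕ) : ℤ) =
          d.natAbs * ((4 * D.natAbs : ℕ) : ℤ) + d := by
        rw [Nat.cast_mul, Nat.cast_sub (by lia)]
        push_cast
        rw [abs_of_neg h0]
        ring
      rw [h2, show (p : ℤ) - (d.natAbs * ((4 * D.natAbs : ℕ) : ℤ) + d) =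
        (p - d) - d.natAbs * ((4 * D.natAbs : ℕ) : ℤ) by ring]
      exact dvd_sub h1 (dvd_mul_left _ _)
  · rw [if_neg (by lia), one_mul]
    refine jacobiSym_congr_right hp hdn ?_
    rw [Nat.ModEq.comm, ← Int.natCast_modEq_iff, Int.modEq_iff_dvd, Int.natCast_natAbs,
      abs_of_nonneg h0]
    exact hdvd _ ⟨t, ht⟩

theorem jacobiSym_eq_jacobiSym_natAbs {D : ℤ} (hD : D % 4 = 1) {m : ℕ} (hm : Odd m) :
    jacobiSym D m = jacobiSym m D.natAbs := by
  rcases lt_or_ge D 0 with h0 | h0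
  · have hD' : D = -1 * (D.natAbs : ℤ) := by lia
    have h3 : D.natAbs % 4 = 3 := by lia
    rw [hD', jacobiSym.mul_left, ← hD', jacobiSym.at_neg_one hm]
    rcases Nat.odd_mod_four_iff.mp (Nat.odd_iff.mp hm) with h | h
    · rw [ZMod.χ₄_nat_one_mod_four h, one_mul,
        jacobiSym.quadratic_reciprocity_one_mod_four h (Nat.odd_iff.mpr (by lia))]
    · rw [ZMod.χ₄_nat_three_mod_four h, jacobiSym.quadratic_reciprocity_three_mod_four h h3,
        neg_one_mul]
  · have hD' : D = (D.natAbs : ℤ) := by lia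
    rw [hD', jacobiSym.quadratic_reciprocity_one_mod_four (by lia) hm, ← hD']

theorem kronTwo_eq_jacobiSym {D : ℤ} (hD : Odd D) : kronTwo D = jacobiSym 2 D.natAbs := by
  rw [jacobiSym.at_two (Int.natAbs_odd.mpr hD), ZMod.χ₈_nat_eq_if_mod_eight, kronTwo]
  have := Int.odd_iff.mp hD
  grind

theorem kronecker_eq_jacobiSym_natAbs {D : ℤ} (hD : D % 4 = 1) (d : ℤ) :
    kronecker D d = jacobiSym d D.natAbs := by
  have hD2 : Odd D := Int.odd_iff.mpr (by lia)
  have hDn := Int.natAbs_odd.mpr hD2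
  rw [_root_.kronecker]
  rcases eq_or_ne d 0 with rfl | hd
  · rw [if_pos rfl]
    split_ifs with h1
    · obtain rfl : D = 1 := by lia
      simp
    · rw [jacobiSym.zero_left (by lia)]
  · rw [if_neg hd]
    obtain ⟨e, m, hm, hem⟩ := Nat.exists_eq_two_pow_mul_odd (Int.natAbs_ne_zero.mpr hd)
    have he : padicValNat 2 d.natAbs = e := by
      rw [hem, padicValNat.mul (by positivity) hm.pos.ne', padicValNat.prime_pow,
        padicValNat.eq_zero_of_not_dvd hm.not_two_dvd_nat, add_zero]
    have hs : (if d < 0 ∧ D < 0 then -1 else 1) * jacobiSym d.natAbs D.natAbs =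
        jacobiSym d D.natAbs := by
      rcases lt_or_ge d 0 with h0 | h0
      · have hd' : d = -1 * (d.natAbs : ℤ) := by lia
        conv_rhs => rw [hd', jacobiSym.mul_left, jacobiSym.at_neg_one hDn]
        congr 1
        split_ifs with h1
        · exact (ZMod.χ₄_nat_three_mod_four (by lia)).symm
        · exact (ZMod.χ₄_nat_one_mod_four (by lia)).symm
      · rw [if_neg (by lia), one_mul, Int.natCast_natAbs, abs_of_nonneg h0]
    rw [← hs, he, hem, Nat.mul_div_cancel_left _ (by positivity),
      jacobiSym_eq_jacobiSym_natAbs hD hm, kronTwo_eq_jacobiSym hD2, mul_assoc,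
      ← jacobiSym.pow_left, ← jacobiSym.mul_left]
    push_cast
    rfl

theorem jacobiSym_eq_neg_one_of_mod_four {D : ℤ} {d : ℕ} (hD : D % 4 = 3) (hd : d % 4 = 3)
    (hdD : D ∣ d - 1) : jacobiSym D d = -1 := by
  have h1 : jacobiSym d D.natAbs = 1 := by
    rw [jacobiSym.mod_left' (a₂ := 1), jacobiSym.one_left]
    exact Int.ModEq.symm (Int.modEq_iff_dvd.mpr (Int.natAbs_dvd.mpr hdD))
  have hdo : Odd d := Nat.odd_iff.mpr (by lia)
  rcases lt_or_ge D 0 with h0 | h0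
  · have hD' : D = -1 * (D.natAbs : ℤ) := by lia
    rw [hD', jacobiSym.mul_left, jacobiSym.at_neg_one hdo, ZMod.χ₄_nat_three_mod_four hd,
      jacobiSym.quadratic_reciprocity_one_mod_four (by lia) hdo, h1, mul_one]
  · have hD' : D = (D.natAbs : ℤ) := by lia
    rw [hD', jacobiSym.quadratic_reciprocity_three_mod_four (by lia) hd, h1]

end Kronecker

section Assembly

/-- The upper unipotent matrix with entry `x`. -/
def upperUnipotent (x : ℤ) : SL(2, ℤ) := ⟨!![1, x; 0, 1], by simp⟩

/-- The lower unipotent matrix with entry `x`. -/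
def lowerUnipotent (x : ℤ) : SL(2, ℤ) := ⟨!![1, 0; x, 1], by simp⟩

theorem coe_upperUnipotent (x : ℤ) : (upperUnipotent x).1 = !![1, x; 0, 1] := rfl

theorem coe_lowerUnipotent (x : ℤ) : (lowerUnipotent x).1 = !![1, 0; x, 1] := rfl

theorem mul_upperUnipotent_mul_upperUnipotent_neg (γ : SL(2, ℤ)) (x : ℤ) :
    γ * upperUnipotent x * upperUnipotent (-x) = γ := by
  rw [mul_assoc]
  convert mul_one γ
  ext i j
  fin_cases i <;> fin_cases j <;> simp [coe_upperUnipotent, Matrix.mul_apply, Fin.sum_univ_two]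

theorem mul_lowerUnipotent_mul_lowerUnipotent_neg (γ : SL(2, ℤ)) (x : ℤ) :
    γ * lowerUnipotent x * lowerUnipotent (-x) = γ := by
  rw [mul_assoc]
  convert mul_one γ
  ext i j
  fin_cases i <;> fin_cases j <;> simp [coe_lowerUnipotent, Matrix.mul_apply, Fin.sum_univ_two]

theorem upperUnipotent_mem_Gamma0 (N : ℕ) (x : ℤ) : upperUnipotent x ∈ Gamma0 N := by
  rw [Gamma0_mem]
  simp [coe_upperUnipotent]

theorem lowerUnipotent_mem_Gamma0 (N : ℕ) (x : ℤ) : lowerUnipotent (N * x) ∈ Gamma0 N := by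
  rw [Gamma0_mem]
  simp [coe_lowerUnipotent]

theorem mul_unipotents_apply_one_one (γ : SL(2, ℤ)) (x y : ℤ) :
    (γ * lowerUnipotent x * upperUnipotent y) 1 1 = (γ 1 0 + γ 1 1 * x) * y + γ 1 1 := by
  simp [coe_lowerUnipotent, coe_upperUnipotent, Matrix.mul_apply, Fin.sum_univ_two]

theorem isCoprime_of_mem_Gamma0 {N : ℕ} {γ : SL(2, ℤ)} (hγ : γ ∈ Gamma0 N) :
    IsCoprime (γ 1 1) (N : ℤ) := by
  obtain ⟨c, hc⟩ := (ZMod.intCast_zmod_eq_zero_iff_dvd _ _).mp (Gamma0_mem.mp hγ)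
  refine ⟨γ 0 0, -(γ 0 1 * c), ?_⟩
  have := γ.det_coe
  rw [Matrix.det_fin_two, hc] at this
  linear_combination this

/-- Dirichlet's theorem in the form used to move the lower right entry to a prime. -/
theorem exists_prime_lower_right {N : ℕ} (hN : 0 < N) {D : ℤ} (hD : D ≠ 0) {γ : SL(2, ℤ)}
    (hγ : γ ∈ Gamma0 N) (hcop : IsCoprime (γ 1 1) (4 * D)) (hd : γ 1 1 ≠ 0) :
    ∃ (x y : ℤ) (p : ℕ), p.Prime ∧
      (γ * lowerUnipotent (N * x) * upperUnipotent y) 1 1 = p ∧ 4 * D ∣ p - γ 1 1 := by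
  obtain ⟨c, hc⟩ := (ZMod.intCast_zmod_eq_zero_iff_dvd _ _).mp (Gamma0_mem.mp hγ)
  obtain ⟨u, v, huv⟩ := hcop
  obtain ⟨s, hs⟩ : ∃ s, c * v + s * γ 1 1 ≠ 0 := by
    by_cases h : c * v = 0
    · exact ⟨1, by simpa [h] using hd⟩
    · exact ⟨0, by simpa using h⟩
  set t := c * v + s * γ 1 1
  set x := -(c * u) + 4 * D * s
  have hx : γ 1 0 + γ 1 1 * (N * x) = 4 * D * N * t := by
    rw [hc]
    simp only [t, x]
    linear_combination -(N * c : ℤ) * huv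
  have hne : 4 * D * N * t ≠ 0 := by
    have : (N : ℤ) ≠ 0 := by exact_mod_cast hN.ne'
    exact mul_ne_zero (mul_ne_zero (mul_ne_zero (by norm_num) hD) this) hs
  have hcop' : IsCoprime (γ 1 1) (4 * D * N * t) := by
    rw [← hx]
    refine IsCoprime.add_mul_left_right ⟨γ 0 0, -γ 0 1, ?_⟩ _
    have := γ.det_coe
    rw [Matrix.det_fin_two] at this
    linear_combination this
  obtain ⟨p, -, hp, hpd⟩ := Nat.forall_exists_prime_gt_and_zmodEq 0
    (q := (4 * D * N * t).natAbs) (a := γ 1 1) (Int.natAbs_ne_zero.mpr hne)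
    (by rwa [Int.natCast_natAbs, IsCoprime.abs_right_iff])
  obtain ⟨y, hy⟩ : 4 * D * N * t ∣ p - γ 1 1 := Int.natAbs_dvd.mp hpd.symm.dvd
  refine ⟨x, y, p, hp, ?_, ?_⟩
  · rw [mul_unipotents_apply_one_one, hx]
    linear_combination -hy
  · rw [hy]
    exact ⟨N * t * y, by ring⟩

variable {n k : ℕ} {A B : Matrix (Fin n) (Fin n) ℤ} {N ν : ℕ} {P : (Fin n → ℤ) → ℂ}

theorem isCoprime_det (hAB : A * B = (N : ℤ) • 1) {d : ℤ} (hd : IsCoprime d (N : ℤ)) (k : ℕ) :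
    IsCoprime d ((-1) ^ k * A.det) := by
  have h : A.det * B.det = (N : ℤ) ^ n := by
    rw [← Matrix.det_mul, hAB, Matrix.det_smul, Fintype.card_fin, Matrix.det_one, mul_one]
  have h1 : IsCoprime d A.det := (h ▸ hd.pow_right (n := n)).of_mul_right_left
  exact IsCoprime.mul_right (isCoprime_one_right.neg_right.pow_right) h1

theorem thetaTransforms_one (hsymm : A.IsSymm)
    (hpos : ∀ x : Fin n → ℤ, x ≠ 0 → 0 < x ⬝ᵥ A.mulVec x) (hk : n = k + k)
    (heven : ∀ i, 2 ∣ A i i) (hN : 0 < N) (hAB : A * B = (N : ℤ) • 1) (hBeven : ∀ i, 2 ∣ B i i)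
    (hP : IsSpherical A ν P) {γ : SL(2, ℤ)} (hγ : γ ∈ Gamma0 N) (hd : γ 1 1 = 1) :
    ThetaTransforms A N (k + ν) P γ 1 := by
  have h := thetaTransforms_of_pos hsymm hpos hk heven hN hAB hBeven hP hγ (d := 1)
    (by simpa using hd)
  simpa [formGaussSum_one] using h

theorem thetaTransforms_mul_unipotents (hsymm : A.IsSymm)
    (hpos : ∀ x : Fin n → ℤ, x ≠ 0 → 0 < x ⬝ᵥ A.mulVec x) (hk : n = k + k)
    (heven : ∀ i, 2 ∣ A i i) (hN : 0 < N) (hAB : A * B = (N : ℤ) • 1) (hBeven : ∀ i, 2 ∣ B i i)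
    (hP : IsSpherical A ν P) {γ : SL(2, ℤ)} {x y : ℤ} {ε : ℂ}
    (h : ThetaTransforms A N (k + ν) P (γ * lowerUnipotent (N * x) * upperUnipotent y) ε) :
    ThetaTransforms A N (k + ν) P γ ε := by
  have hy := upperUnipotent_mem_Gamma0 N (-y)
  have hx := lowerUnipotent_mem_Gamma0 N (-x)
  have h1 := (h.mul hsymm hN hAB hBeven hy
    (thetaTransforms_one hsymm hpos hk heven hN hAB hBeven hP hy rfl)).mul hsymm hN hAB hBeven hx
    (thetaTransforms_one hsymm hpos hk heven hN hAB hBeven hP hx rfl)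
  rwa [mul_upperUnipotent_mul_upperUnipotent_neg, mul_neg,
    mul_lowerUnipotent_mul_lowerUnipotent_neg, mul_one, mul_one] at h1

theorem thetaTransforms_of_prime (hsymm : A.IsSymm)
    (hpos : ∀ x : Fin n → ℤ, x ≠ 0 → 0 < x ⬝ᵥ A.mulVec x) (hk : n = k + k)
    (heven : ∀ i, 2 ∣ A i i) (hN : 0 < N) (hAB : A * B = (N : ℤ) • 1) (hBeven : ∀ i, 2 ∣ B i i)
    (hP : IsSpherical A ν P) {γ : SL(2, ℤ)} (hγ : γ ∈ Gamma0 N) {p : ℕ} [hp : Fact p.Prime]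
    (hp2 : p ≠ 2) (hd : γ 1 1 = p) :
    ThetaTransforms A N (k + ν) P γ (jacobiSym ((-1) ^ k * A.det) p) := by
  have hdet := γ.det_coe
  rw [Matrix.det_fin_two, hd] at hdet
  have hb : ((γ 0 1 : ℤ) : ZMod p) ≠ 0 := by
    intro h0
    have := congrArg (Int.cast : ℤ → ZMod p) hdet
    simp [h0] at this
  have hA : ((A.det : ℤ) : ZMod p) ≠ 0 := by
    rw [Ne, ZMod.intCast_zmod_eq_zero_iff_dvd]
    intro h0
    have h1 := isCoprime_det hAB (isCoprime_of_mem_Gamma0 hγ) 0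
    rw [hd, pow_zero, one_mul] at h1
    exact (Nat.prime_iff_prime_int.mp hp.out).not_isUnit (h1.isUnit_of_dvd' dvd_rfl h0)
  have h := thetaTransforms_of_pos hsymm hpos hk heven hN hAB hBeven hP hγ hd
  rwa [formGaussSum_prime hsymm heven hk hp2 hb hA, mul_div_cancel_right₀ _
    (pow_ne_zero _ (by exact_mod_cast hp.out.ne_zero))] at h

theorem thetaTransforms_of_odd (hsymm : A.IsSymm)
    (hpos : ∀ x : Fin n → ℤ, x ≠ 0 → 0 < x ⬝ᵥ A.mulVec x) (hk : n = k + k)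
    (heven : ∀ i, 2 ∣ A i i) (hN : 0 < N) (hAB : A * B = (N : ℤ) • 1) (hBeven : ∀ i, 2 ∣ B i i)
    (hP : IsSpherical A ν P) {γ : SL(2, ℤ)} (hγ : γ ∈ Gamma0 N) (hd : Odd (γ 1 1)) :
    ThetaTransforms A N (k + ν) P γ (_root_.kronecker ((-1) ^ k * A.det) (γ 1 1)) := by
  have hD : (-1) ^ k * A.det ≠ 0 :=
    mul_ne_zero (pow_ne_zero _ (by norm_num)) (det_ne_zero_of_pos hpos)
  have hcop : IsCoprime (γ 1 1) (4 * ((-1) ^ k * A.det)) := by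
    refine IsCoprime.mul_right ?_ (isCoprime_det hAB (isCoprime_of_mem_Gamma0 hγ) k)
    rw [show (4 : ℤ) = 2 ^ 2 by norm_num]
    exact (Int.isCoprime_two_right.mpr hd).pow_right
  have hd0 : γ 1 1 ≠ 0 := by
    intro h0
    simp [h0] at hd
  obtain ⟨x, y, p, hp, hpe, hpd⟩ := exists_prime_lower_right hN hD hγ hcop hd0
  have : Fact p.Prime := ⟨hp⟩
  have hp2 : p ≠ 2 := by
    rintro rfl
    obtain ⟨t, ht⟩ := hpd
    obtain ⟨s, hs⟩ := hd
    push_cast at ht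
    lia
  rw [← jacobiSym_eq_kronecker hD hd hpd]
  refine thetaTransforms_mul_unipotents hsymm hpos hk heven hN hAB hBeven hP (x := x) (y := y)
    (thetaTransforms_of_prime hsymm hpos hk heven hN hAB hBeven hP ?_ hp2 hpe)
  exact mul_mem (mul_mem hγ (lowerUnipotent_mem_Gamma0 N x)) (upperUnipotent_mem_Gamma0 N y)

theorem thetaSum_one_ne_zero (hsymm : A.IsSymm)
    (hpos : ∀ x : Fin n → ℤ, x ≠ 0 → 0 < x ⬝ᵥ A.mulVec x) (hN : 0 < N) :
    thetaSum A N (fun _ => 1) 0 Complex.I ≠ 0 := by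
  have hs := summable_thetaExp_mul_pow hsymm hpos (τ := Complex.I) (by simp) 0 0 0
  simp only [pow_zero, mul_one] at hs
  have hterm : ∀ z : Fin n → ℤ, thetaExp A Complex.I 0 z =
      ((Real.exp (-(Real.pi * (z ⬝ᵥ A.mulVec z : ℤ))) : ℝ) : ℂ) := by
    intro z
    rw [thetaExp, Complex.ofReal_exp]
    congr 1
    have : (fun i => (addInt 0 z i : ℂ)) = fun i => (z i : ℂ) := by
      ext i
      simp [addInt]
    rw [this, bilin_intCast]
    push_cast
    linear_combination (Real.pi * ((z ⬝ᵥ A.mulVec z : ℤ) : ℂ)) * Complex.I_mul_I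
  have h0 : (fun i => (((0 : Fin n → ℤ) i : ℤ) / N : ℝ)) = 0 := by
    ext i
    simp
  rw [thetaSum_eq_tsum hN]
  simp only [h0, one_mul, hterm] at hs ⊢
  rw [← Complex.ofReal_tsum]
  exact_mod_cast ((Complex.summable_ofReal.mp hs).tsum_pos (fun z => (Real.exp_pos _).le) 0
    (Real.exp_pos _)).ne'

theorem ThetaTransforms.unique (hsymm : A.IsSymm)
    (hpos : ∀ x : Fin n → ℤ, x ≠ 0 → 0 < x ⬝ᵥ A.mulVec x) (hN : 0 < N) {w : ℕ} {γ : SL(2, ℤ)}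
    {ε ε' : ℂ} (h₁ : ThetaTransforms A N w (fun _ => 1) γ ε)
    (h₂ : ThetaTransforms A N w (fun _ => 1) γ ε') : ε = ε' := by
  have e₁ := h₁ 0 (by simp) UpperHalfPlane.I
  rw [h₂ 0 (by simp) UpperHalfPlane.I] at e₁
  have hj0 : ((γ 1 0 : ℤ) : ℂ) * (UpperHalfPlane.I : ℂ) + ((γ 1 1 : ℤ) : ℂ) ≠ 0 := by
    exact_mod_cast UpperHalfPlane.denom_ne_zero γ UpperHalfPlane.I
  have hz : (fun i => γ 0 0 * (0 : Fin n → ℤ) i) = 0 := by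
    ext i
    simp
  rw [hz, UpperHalfPlane.coe_I] at e₁
  have h1 := mul_right_cancel₀ (thetaSum_one_ne_zero hsymm hpos hN) e₁
  rw [UpperHalfPlane.coe_I] at hj0
  exact (mul_right_cancel₀ (Complex.exp_ne_zero _) (mul_right_cancel₀ (pow_ne_zero _ hj0) h1)).symm

theorem discriminant_mod_four_of_odd (hsymm : A.IsSymm)
    (hpos : ∀ x : Fin n → ℤ, x ≠ 0 → 0 < x ⬝ᵥ A.mulVec x) (hk : n = k + k)
    (heven : ∀ i, 2 ∣ A i i) (hN : 0 < N) (hAB : A * B = (N : ℤ) • 1) (hBeven : ∀ i, 2 ∣ B i i)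
    (hNodd : Odd N) : ((-1) ^ k * A.det) % 4 = 1 := by
  set D := (-1) ^ k * A.det with hDdef
  have hDodd : Odd D := Int.isCoprime_two_left.mp
    (isCoprime_det hAB (Int.isCoprime_two_left.mpr (by exact_mod_cast hNodd)) k)
  by_contra hD1
  have hD3 : D % 4 = 3 := by
    obtain ⟨s, hs⟩ := hDodd
    lia
  have hP : IsSpherical A 0 (fun _ => 1) := Or.inl ⟨rfl, 1, rfl⟩
  have hγ₁ := lowerUnipotent_mem_Gamma0 N (2 * D.natAbs)
  have hγ₂ := upperUnipotent_mem_Gamma0 N 1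
  have h1 := (thetaTransforms_one hsymm hpos hk heven hN hAB hBeven hP hγ₁ rfl).mul hsymm hN hAB
    hBeven hγ₂ (thetaTransforms_one hsymm hpos hk heven hN hAB hBeven hP hγ₂ rfl)
  have hd : (lowerUnipotent (N * (2 * D.natAbs)) * upperUnipotent 1) 1 1 =
      ((N * (2 * D.natAbs) + 1 : ℕ) : ℤ) := by
    simp [coe_lowerUnipotent, coe_upperUnipotent, Matrix.mul_apply, Fin.sum_univ_two]
  have hodd : Odd (N * (2 * D.natAbs) + 1) := ⟨N * D.natAbs, by ring⟩
  have h2 := thetaTransforms_of_odd hsymm hpos hk heven hN hAB hBeven hP (mul_mem hγ₁ hγ₂)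
    (by rw [hd]; exact_mod_cast hodd)
  have h3 := h1.unique hsymm hpos hN h2
  rw [hd, ← hDdef, kronecker_of_odd (by exact_mod_cast hodd), if_neg (by lia), Int.natAbs_natCast,
    jacobiSym_eq_neg_one_of_mod_four hD3] at h3
  · norm_num at h3
  · obtain ⟨s, hs⟩ := hNodd.mul (Int.natAbs_odd.mpr hDodd)
    rw [mul_left_comm, hs]
    lia
  · refine (dvd_abs D D).mpr dvd_rfl |>.trans ⟨N * 2, ?_⟩
    push_cast
    ring

theorem thetaTransforms_of_mem_Gamma0 (hsymm : A.IsSymm)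
    (hpos : ∀ x : Fin n → ℤ, x ≠ 0 → 0 < x ⬝ᵥ A.mulVec x) (hk : n = k + k)
    (heven : ∀ i, 2 ∣ A i i) (hN : 0 < N) (hAB : A * B = (N : ℤ) • 1) (hBeven : ∀ i, 2 ∣ B i i)
    (hP : IsSpherical A ν P) {γ : SL(2, ℤ)} (hγ : γ ∈ Gamma0 N) :
    ThetaTransforms A N (k + ν) P γ (_root_.kronecker ((-1) ^ k * A.det) (γ 1 1)) := by
  rcases Int.even_or_odd (γ 1 1) with hd | hd
  swap
  · exact thetaTransforms_of_odd hsymm hpos hk heven hN hAB hBeven hP hγ hd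
  have hNd := isCoprime_of_mem_Gamma0 hγ
  have hNodd : Odd N := by
    have := Int.isCoprime_two_left.mp (hNd.of_isCoprime_of_dvd_left hd.two_dvd)
    exact_mod_cast this
  have hD := discriminant_mod_four_of_odd hsymm hpos hk heven hN hAB hBeven hNodd
  have hcop := isCoprime_det hAB hNd k
  set D := (-1) ^ k * A.det with hDdef
  obtain ⟨c, hc⟩ := (ZMod.intCast_zmod_eq_zero_iff_dvd _ _).mp (Gamma0_mem.mp hγ)
  obtain ⟨u, v, huv⟩ := hcop
  have hentry : (γ * lowerUnipotent (N * (-(c * u))) * upperUnipotent 1) 1 1 =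
      γ 1 1 + D * (N * c * v) := by
    rw [mul_unipotents_apply_one_one, hc]
    linear_combination -(N * c : ℤ) * huv
  have hc2 : Odd (γ 1 0) := by
    have hdet := γ.det_coe
    rw [Matrix.det_fin_two] at hdet
    have h1 : Odd (γ 0 1 * γ 1 0) := by
      rw [show γ 0 1 * γ 1 0 = γ 0 0 * γ 1 1 - 1 by linarith]
      exact (hd.mul_left _).sub_odd odd_one
    exact (Int.odd_mul.mp h1).2
  have hodd : Odd ((γ * lowerUnipotent (N * (-(c * u))) * upperUnipotent 1) 1 1) := by
    rw [mul_unipotents_apply_one_one, mul_one]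
    exact (hc2.add_even (hd.mul_right _)).add_even hd
  have h := thetaTransforms_of_odd hsymm hpos hk heven hN hAB hBeven hP
    (mul_mem (mul_mem hγ (lowerUnipotent_mem_Gamma0 N _)) (upperUnipotent_mem_Gamma0 N 1)) hodd
  rw [← hDdef, hentry, kronecker_eq_jacobiSym_natAbs hD, jacobiSym.mod_left' (a₂ := γ 1 1),
    ← kronecker_eq_jacobiSym_natAbs hD] at h
  · exact thetaTransforms_mul_unipotents hsymm hpos hk heven hN hAB hBeven hP h
  · refine Int.ModEq.symm (Int.modEq_iff_dvd.mpr (Int.natAbs_dvd.mpr ⟨N * c * v, by ring⟩))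

theorem mul_eq_smul_one_of_smul_inv_eq
    (hpos : ∀ x : Fin n → ℤ, x ≠ 0 → 0 < x ⬝ᵥ A.mulVec x)
    (hB : (N : ℚ) • (A.map (Int.cast : ℤ → ℚ))⁻¹ = B.map (Int.cast : ℤ → ℚ)) :
    A * B = (N : ℤ) • 1 := by
  have hu : IsUnit (A.map (Int.cast : ℤ → ℚ)).det := by
    rw [← Int.cast_det A]
    exact isUnit_iff_ne_zero.mpr (by exact_mod_cast det_ne_zero_of_pos hpos)
  have h : (A * B).map (Int.cast : ℤ → ℚ) = ((N : ℤ) • (1 : Matrix (Fin n) (Fin n) ℤ)).map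
      (Int.cast : ℤ → ℚ) := by
    rw [Matrix.map_mul_intCast, ← hB, Matrix.mul_smul, Matrix.mul_nonsing_inv _ hu]
    ext i j
    rw [Matrix.map_apply, Matrix.smul_apply, Matrix.smul_apply, Matrix.one_apply, Matrix.one_apply]
    split_ifs <;> simp
  exact Matrix.map_injective Int.cast_injective h

end Assembly

/-- **Proposition 3** (theta transformation under `Γ₀(N)`).  With `A` an even positive-definite
symmetric integer matrix of even size `n`, `D = (-1)^(n/2) det A`, `N` the level of `A`, `P` a
spherical function of degree `ν`, and `h ∈ ℤⁿ` with `A h ≡ 0 (mod N)`, the theta function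
`θ(τ; h) = ∑_{x ≡ h (mod N)} P(x) e(ᵗx A x · τ / 2N²)` satisfies, for `γ = (a b; c d) ∈ Γ₀(N)`,
`θ(γτ; h) = (D/d) e(ab ᵗh A h / 2N²) (cτ+d)^{n/2+ν} θ(τ; a·h)`. -/
theorem theta_transformation_Gamma0 (n : ℕ) (hn : 0 < n) (hne : Even n)
    (A : Matrix (Fin n) (Fin n) ℤ) (hsymm : A.IsSymm) (heven : ∀ i, 2 ∣ A i i)
    (hpos : ∀ x : Fin n → ℤ, x ≠ 0 → 0 < x ⬝ᵥ A.mulVec x)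
    (D : ℤ) (hD : D = (-1) ^ (n / 2) * A.det)
    (N : ℕ)
    (hN : IsLeast {N' : ℕ | 0 < N' ∧ ∃ B : Matrix (Fin n) (Fin n) ℤ, (∀ i, 2 ∣ B i i) ∧
        (N' : ℚ) • (A.map (Int.cast : ℤ → ℚ))⁻¹ = B.map (Int.cast : ℤ → ℚ)} N)
    (ν : ℕ) (P : (Fin n → ℤ) → ℂ) (hP : IsSpherical A ν P)
    (h : Fin n → ℤ) (hh : ∀ i, (N : ℤ) ∣ A.mulVec h i)
    (θ : (Fin n → ℤ) → ℍ → ℂ)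
    (hθ : ∀ (h' : Fin n → ℤ) (τ : ℍ), θ h' τ =
        ∑' x : {x : Fin n → ℤ // ∀ i, (N : ℤ) ∣ (x i - h' i)},
          P x * Complex.exp (2 * (Real.pi : ℂ) * Complex.I *
            (((x : Fin n → ℤ) ⬝ᵥ A.mulVec (x : Fin n → ℤ) : ℤ) : ℂ) * (τ : ℂ) /
              (2 * (N : ℂ) ^ 2))) :
    ∀ γ ∈ Gamma0 N, ∀ τ : ℍ,
      θ h (γ • τ) = (kronecker D ((γ : Matrix (Fin 2) (Fin 2) ℤ) 1 1) : ℂ) *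
        Complex.exp (2 * (Real.pi : ℂ) * Complex.I *
          (((γ : Matrix (Fin 2) (Fin 2) ℤ) 0 0 : ℂ) * ((γ : Matrix (Fin 2) (Fin 2) ℤ) 0 1 : ℂ) *
            ((h ⬝ᵥ A.mulVec h : ℤ) : ℂ)) / (2 * (N : ℂ) ^ 2)) *
        (((γ : Matrix (Fin 2) (Fin 2) ℤ) 1 0 : ℂ) * (τ : ℂ) +
            ((γ : Matrix (Fin 2) (Fin 2) ℤ) 1 1 : ℂ)) ^ (n / 2 + ν) *
        θ (fun i => (γ : Matrix (Fin 2) (Fin 2) ℤ) 0 0 * h i) τ := by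
  intro γ hγ τ
  obtain ⟨k, hk⟩ := hne
  obtain ⟨hN0, B, hBeven, hB⟩ := hN.1
  have hk2 : n / 2 = k := by lia
  rw [hθ, hθ, hD, hk2]
  exact thetaTransforms_of_mem_Gamma0 hsymm hpos hk heven hN0
    (mul_eq_smul_one_of_smul_inv_eq hpos hB) hBeven hP hγ h hh τ
end

section
/- For every positive integer n, the number of pairs (x, y) ∈ ℤ² with x² + y² = n, x ≡ 1 (mod 2), and y ≡ 0 (mod 2) equals 2 ∑_{d|n} χ₋₄(d) − 2 ∑_{d|(n/2)} χ₋₄(d). -/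
open Finset

/-- The Kronecker symbol `(-4/d)` for positive `d`. -/
def chiM4 (d : ℕ) : ℤ := if d % 4 = 1 then 1 else if d % 4 = 3 then -1 else 0

/-- `Sdiv χ n k = ∑_{d ∣ n/k} χ d`, interpreted as `0` when `k` does not divide `n`. -/
def Sdiv (χ : ℕ → ℤ) (n k : ℕ) : ℤ := if k ∣ n then ∑ d ∈ (n / k).divisors, χ d else 0

theorem chiM4_mul (a b : ℕ) : chiM4 (a * b) = chiM4 a * chiM4 b := by
  unfold chiM4
  rw [Nat.mul_mod]
  have ha := Nat.mod_lt a (by norm_num : 0 < 4)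
  have hb := Nat.mod_lt b (by norm_num : 0 < 4)
  interval_cases a % 4 <;> interval_cases b % 4 <;> rfl

theorem chiM4_two : chiM4 2 = 0 := rfl

/-- Hecke-type recursion for the divisor sum of `chiM4` at a prime. -/
theorem sum_divisors_chiM4_prime_mul {p m : ℕ} (hp : p.Prime) (hm : 0 < m) :
    ∑ d ∈ (p * m).divisors, chiM4 d =
      (1 + chiM4 p) * ∑ d ∈ m.divisors, chiM4 d - chiM4 p * Sdiv chiM4 m p := by
  have hinj : Function.Injective (fun d : ℕ => p * d) := fun a b h =>
    Nat.eq_of_mul_eq_mul_left hp.pos h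
  have himage : ∀ s : Finset ℕ, ∑ d ∈ s.image (fun d => p * d), chiM4 d =
      chiM4 p * ∑ d ∈ s, chiM4 d := by
    intro s
    rw [sum_image (fun a _ b _ h => hinj h), mul_sum]
    simp only [chiM4_mul]
  have hunion : (p * m).divisors = m.divisors ∪ m.divisors.image (fun d => p * d) := by
    ext d
    simp only [Nat.mem_divisors, mem_union, mem_image]
    constructor
    · rintro ⟨hd, -⟩
      by_cases hpd : p ∣ d
      · obtain ⟨e, rfl⟩ := hpd
        exact Or.inr ⟨e, ⟨Nat.dvd_of_mul_dvd_mul_left hp.pos hd, hm.ne'⟩, rfl⟩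
      · exact Or.inl
          ⟨(((Nat.Prime.coprime_iff_not_dvd hp).2 hpd).symm).dvd_of_dvd_mul_left hd, hm.ne'⟩
    · rintro (⟨hd, -⟩ | ⟨e, ⟨he, -⟩, rfl⟩)
      · exact ⟨hd.mul_left p, (Nat.mul_pos hp.pos hm).ne'⟩
      · exact ⟨Nat.mul_dvd_mul_left p he, (Nat.mul_pos hp.pos hm).ne'⟩
  have hinter : ∑ d ∈ m.divisors ∩ m.divisors.image (fun d => p * d), chiM4 d =
      chiM4 p * Sdiv chiM4 m p := by
    unfold Sdiv
    split_ifs with h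
    · obtain ⟨k, rfl⟩ := h
      have hk : k ≠ 0 := by rintro rfl; simp at hm
      rw [Nat.mul_div_cancel_left _ hp.pos, ← himage]
      congr 1
      ext d
      simp only [Nat.mem_divisors, mem_inter, mem_image]
      constructor
      · rintro ⟨⟨hd, -⟩, e, -, rfl⟩
        exact ⟨e, ⟨Nat.dvd_of_mul_dvd_mul_left hp.pos hd, hk⟩, rfl⟩
      · rintro ⟨e, ⟨he, -⟩, rfl⟩
        exact ⟨⟨Nat.mul_dvd_mul_left p he, hm.ne'⟩, e, ⟨he.mul_left p, hm.ne'⟩, rfl⟩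
    · rw [mul_zero]
      apply sum_eq_zero
      intro d hd
      simp only [Nat.mem_divisors, mem_inter, mem_image] at hd
      obtain ⟨⟨hd, -⟩, e, -, rfl⟩ := hd
      exact absurd ((dvd_mul_right p e).trans hd) h
  have key := sum_union_inter (s₁ := m.divisors) (s₂ := m.divisors.image (fun d => p * d))
    (f := chiM4)
  rw [← hunion, hinter, himage] at key
  linear_combination key

/-- The integer points on the circle `x ^ 2 + y ^ 2 = n`. -/
def circlePoints (n : ℕ) : Set (ℤ × ℤ) := {q | q.1 ^ 2 + q.2 ^ 2 = (n : ℤ)}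

theorem circlePoints_finite (n : ℕ) : (circlePoints n).Finite := by
  apply ((Set.finite_Icc (-(n : ℤ)) n).prod (Set.finite_Icc (-(n : ℤ)) n)).subset
  rintro ⟨x, y⟩ h
  simp only [circlePoints, Set.mem_ofPred_eq] at h
  simp only [Set.mem_prod, Set.mem_Icc]
  refine ⟨⟨?_, ?_⟩, ?_, ?_⟩ <;> nlinarith [sq_nonneg x, sq_nonneg y]

theorem ncard_circlePoints_one : (circlePoints 1).ncard = 4 := by
  have h : circlePoints 1 = (({(1, 0), (-1, 0), (0, 1), (0, -1)} : Finset (ℤ × ℤ)) :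
      Set (ℤ × ℤ)) := by
    ext ⟨x, y⟩
    simp only [circlePoints, Set.mem_ofPred_eq, coe_insert, coe_singleton, Set.mem_insert_iff,
      Set.mem_singleton_iff, Prod.mk.injEq, Nat.cast_one]
    constructor
    · intro h
      have hx : -1 ≤ x ∧ x ≤ 1 := by constructor <;> nlinarith [sq_nonneg y]
      have hy : -1 ≤ y ∧ y ≤ 1 := by constructor <;> nlinarith [sq_nonneg x]
      obtain ⟨hx, hx'⟩ := hx
      obtain ⟨hy, hy'⟩ := hy
      interval_cases x <;> interval_cases y <;> simp_all
    · rintro (⟨rfl, rfl⟩ | ⟨rfl, rfl⟩ | ⟨rfl, rfl⟩ | ⟨rfl, rfl⟩) <;> norm_num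
  rw [h, Set.ncard_coe_finset]
  rfl

/-- The points of `circlePoints (p * m)` with both coordinates divisible by `p`. -/
def divisiblePoints (p m : ℕ) : Set (ℤ × ℤ) :=
  {q | q ∈ circlePoints (p * m) ∧ (p : ℤ) ∣ q.1 ∧ (p : ℤ) ∣ q.2}

theorem ncard_divisiblePoints {p m : ℕ} (hp : 0 < p) :
    (divisiblePoints p m).ncard = if p ∣ m then (circlePoints (m / p)).ncard else 0 := by
  have hp' : (p : ℤ) ≠ 0 := by exact_mod_cast hp.ne'
  split_ifs with h
  · obtain ⟨k, rfl⟩ := h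
    rw [Nat.mul_div_cancel_left _ hp]
    have himage : divisiblePoints p (p * k) =
        (fun q : ℤ × ℤ => ((p : ℤ) * q.1, (p : ℤ) * q.2)) '' circlePoints k := by
      ext ⟨x, y⟩
      simp only [divisiblePoints, circlePoints, Set.mem_ofPred_eq, Set.mem_image, Prod.exists,
        Prod.mk.injEq]
      push_cast
      constructor
      · rintro ⟨h, ⟨u, rfl⟩, v, rfl⟩
        refine ⟨u, v, ?_, rfl, rfl⟩
        apply mul_left_cancel₀ (pow_ne_zero 2 hp')
        linear_combination h
      · rintro ⟨u, v, h, rfl, rfl⟩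
        exact ⟨by linear_combination (p : ℤ) ^ 2 * h, dvd_mul_right _ _, dvd_mul_right _ _⟩
    rw [himage, Set.ncard_image_of_injective]
    rintro ⟨x, y⟩ ⟨u, v⟩ h
    simpa [hp.ne'] using h
  · rw [Set.ncard_eq_zero ((circlePoints_finite (p * m)).subset fun _ h => h.1)]
    rw [Set.eq_empty_iff_forall_notMem]
    rintro ⟨x, y⟩ ⟨hq, ⟨u, hu⟩, v, hv⟩
    simp only [circlePoints, Set.mem_ofPred_eq] at hq hu hv
    subst hu hv
    apply h
    rw [← Int.natCast_dvd_natCast]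
    refine ⟨u ^ 2 + v ^ 2, ?_⟩
    push_cast at hq
    apply mul_left_cancel₀ hp'
    linear_combination -hq

theorem circlePoints_prime_mul_of_mod_four_eq_three {p m : ℕ} (hp : p.Prime) (h3 : p % 4 = 3) :
    circlePoints (p * m) = divisiblePoints p m := by
  have := Fact.mk hp
  ext ⟨x, y⟩
  refine ⟨fun h => ⟨h, ?_⟩, fun h => h.1⟩
  simp only [circlePoints, Set.mem_ofPred_eq] at h
  have hz : (x : ZMod p) ^ 2 + (y : ZMod p) ^ 2 = 0 := by
    have := congrArg (Int.cast : ℤ → ZMod p) h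
    push_cast at this
    simpa using this
  rw [← ZMod.intCast_zmod_eq_zero_iff_dvd, ← ZMod.intCast_zmod_eq_zero_iff_dvd]
  have hx : (x : ZMod p) = 0 := by
    by_contra hx
    exact ZMod.mod_four_ne_three_of_sq_eq_neg_sq' hx (eq_neg_of_add_eq_zero_right hz) h3
  refine ⟨hx, ?_⟩
  rw [hx] at hz
  simpa using hz

/-- The points of `circlePoints ((a ^ 2 + b ^ 2) * m)` divisible by `a + b i` are the multiples
of the points of `circlePoints m`. -/
theorem ncard_circlePoints_filter_dvd {p m : ℕ} {a b : ℤ} (hp : p.Prime)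
    (hab : a ^ 2 + b ^ 2 = p) :
    {q | q ∈ circlePoints (p * m) ∧ (p : ℤ) ∣ a * q.1 + b * q.2}.ncard =
      (circlePoints m).ncard := by
  have hp' : (p : ℤ) ≠ 0 := by exact_mod_cast hp.ne_zero
  have himage : {q | q ∈ circlePoints (p * m) ∧ (p : ℤ) ∣ a * q.1 + b * q.2} =
      (fun q : ℤ × ℤ => (a * q.1 - b * q.2, a * q.2 + b * q.1)) '' circlePoints m := by
    ext ⟨x, y⟩
    simp only [circlePoints, Set.mem_ofPred_eq, Set.mem_image, Prod.exists, Prod.mk.injEq]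
    push_cast
    constructor
    · rintro ⟨h, u, hu⟩
      have hv : (p : ℤ) ∣ a * y - b * x := by
        apply (Nat.prime_iff_prime_int.1 hp).dvd_of_dvd_pow (n := 2)
        refine ⟨p * m - p * u ^ 2, ?_⟩
        linear_combination (p : ℤ) * h + (x ^ 2 + y ^ 2) * hab - (a * x + b * y + p * u) * hu
      obtain ⟨v, hv⟩ := hv
      refine ⟨u, v, ?_, ?_, ?_⟩
      · apply mul_left_cancel₀ (pow_ne_zero 2 hp')
        linear_combination (p : ℤ) * h + (x ^ 2 + y ^ 2) * hab - (a * x + b * y + p * u) * hu -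
          (a * y - b * x + p * v) * hv
      · apply mul_left_cancel₀ hp'
        linear_combination x * hab - a * hu + b * hv
      · apply mul_left_cancel₀ hp'
        linear_combination y * hab - a * hv - b * hu
    · rintro ⟨u, v, h, rfl, rfl⟩
      exact ⟨by linear_combination (u ^ 2 + v ^ 2) * hab + p * h,
        u, by linear_combination u * hab⟩
  rw [himage, Set.ncard_image_of_injective]
  rintro ⟨x, y⟩ ⟨u, v⟩ h
  simp only [Prod.mk.injEq] at h
  obtain ⟨h1, h2⟩ := h
  ext
  · apply mul_left_cancel₀ hp'
    linear_combination a * h1 + b * h2 - (x - u) * hab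
  · apply mul_left_cancel₀ hp'
    linear_combination a * h2 - b * h1 - (y - v) * hab

theorem ncard_circlePoints_prime_mul_add_of_mod_four_eq_one {p m : ℕ} (hp : p.Prime)
    (h1 : p % 4 = 1) :
    (circlePoints (p * m)).ncard + (divisiblePoints p m).ncard = 2 * (circlePoints m).ncard := by
  have := Fact.mk hp
  obtain ⟨a, b, hab⟩ := Nat.Prime.sq_add_sq (p := p) (by omega)
  replace hab : (a : ℤ) ^ 2 + (b : ℤ) ^ 2 = p := by exact_mod_cast hab
  generalize (a : ℤ) = a at hab
  generalize (b : ℤ) = b at hab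
  have hpi : Prime (p : ℤ) := Nat.prime_iff_prime_int.1 hp
  have hp2 : ¬ (p : ℤ) ∣ 2 := by
    intro h
    have := Nat.le_of_dvd (by norm_num) (by exact_mod_cast h : p ∣ 2)
    have := hp.two_le
    omega
  have hnot : ∀ {c d : ℤ}, c ^ 2 + d ^ 2 = p → ¬ (p : ℤ) ∣ c := by
    rintro c d hcd ⟨e, rfl⟩
    have hd : (p : ℤ) ∣ d := hpi.dvd_of_dvd_pow (n := 2)
      ⟨1 - p * e ^ 2, by linear_combination hcd⟩
    obtain ⟨f, rfl⟩ := hd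
    apply hpi.not_isUnit
    apply isUnit_of_dvd_one
    refine ⟨e ^ 2 + f ^ 2, mul_left_cancel₀ hpi.ne_zero ?_⟩
    linear_combination -hcd
  have ha := hnot hab
  have hb := hnot ((add_comm _ _).trans hab)
  have hA := ncard_circlePoints_filter_dvd (m := m) hp hab
  have hB := ncard_circlePoints_filter_dvd (m := m) (a := a) (b := -b) hp (by rwa [neg_sq])
  set A := {q | q ∈ circlePoints (p * m) ∧ (p : ℤ) ∣ a * q.1 + b * q.2}
  set B := {q | q ∈ circlePoints (p * m) ∧ (p : ℤ) ∣ a * q.1 + -b * q.2}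
  have hunion : A ∪ B = circlePoints (p * m) := by
    ext ⟨x, y⟩
    refine ⟨fun h => h.elim And.left And.left, fun h => ?_⟩
    have hmul : (p : ℤ) ∣ (a * x + b * y) * (a * x + -b * y) := by
      have h' := h
      simp only [circlePoints, Set.mem_ofPred_eq] at h'
      push_cast at h'
      exact ⟨a ^ 2 * m - y ^ 2, by linear_combination a ^ 2 * h' - y ^ 2 * hab⟩
    exact (hpi.dvd_or_dvd hmul).imp (fun hd => ⟨h, hd⟩) (fun hd => ⟨h, hd⟩)
  have hinter : A ∩ B = divisiblePoints p m := by
    ext ⟨x, y⟩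
    constructor
    · rintro ⟨⟨h, hd⟩, -, hd'⟩
      dsimp only at hd hd'
      have hx : (p : ℤ) ∣ 2 * (a * x) := by
        have hsum := dvd_add hd hd'
        rwa [show a * x + b * y + (a * x + -b * y) = 2 * (a * x) by ring] at hsum
      have hy : (p : ℤ) ∣ 2 * (b * y) := by
        have hdiff := dvd_sub hd hd'
        rwa [show a * x + b * y - (a * x + -b * y) = 2 * (b * y) by ring] at hdiff
      exact ⟨h, ((hpi.dvd_or_dvd hx).resolve_left hp2 |> hpi.dvd_or_dvd).resolve_left ha,
        ((hpi.dvd_or_dvd hy).resolve_left hp2 |> hpi.dvd_or_dvd).resolve_left hb⟩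
    · rintro ⟨h, hx, hy⟩
      exact ⟨⟨h, dvd_add (hx.mul_left _) (hy.mul_left _)⟩,
        h, dvd_add (hx.mul_left _) (hy.mul_left _)⟩
  have hfin := circlePoints_finite (p * m)
  have key := Set.ncard_union_add_ncard_inter A B (hfin.subset fun _ h => h.1)
    (hfin.subset fun _ h => h.1)
  rw [hunion, hinter, hA, hB] at key
  omega

/-- Jacobi's two-square theorem for odd integers. -/
theorem ncard_circlePoints_of_odd (n : ℕ) (hn : n % 2 = 1) :
    ((circlePoints n).ncard : ℤ) = 4 * ∑ d ∈ n.divisors, chiM4 d := by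
  induction n using Nat.strong_induction_on with
  | _ n ih =>
  by_cases h1 : n = 1
  · subst h1
    rw [ncard_circlePoints_one]
    simp [chiM4]
  obtain ⟨p, hp, m, rfl⟩ := Nat.exists_prime_and_dvd h1
  have hodd := Nat.odd_mul.1 (Nat.odd_iff.2 hn)
  have hp2 := Nat.odd_iff.1 hodd.1
  have hm2 := Nat.odd_iff.1 hodd.2
  have hm : 0 < m := by omega
  have hlt : m < p * m := lt_mul_left hm hp.one_lt
  have ihm := ih m hlt hm2
  have ihdiv : ((divisiblePoints p m).ncard : ℤ) = 4 * Sdiv chiM4 m p := by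
    rw [ncard_divisiblePoints hp.pos]
    unfold Sdiv
    split_ifs with h
    · apply ih _ ((Nat.div_le_self m p).trans_lt hlt)
      obtain ⟨k, rfl⟩ := h
      rw [Nat.mul_div_cancel_left _ hp.pos]
      exact Nat.odd_iff.1 (Nat.odd_mul.1 hodd.2).2
    · simp
  rw [sum_divisors_chiM4_prime_mul hp hm]
  have h4 : p % 4 = 1 ∨ p % 4 = 3 := by omega
  rcases h4 with h4 | h4
  · have key := ncard_circlePoints_prime_mul_add_of_mod_four_eq_one (m := m) hp h4
    have hchi : chiM4 p = 1 := by simp [chiM4, h4]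
    rw [hchi]
    zify at key
    linarith
  · have hchi : chiM4 p = -1 := by simp [chiM4, h4]
    rw [circlePoints_prime_mul_of_mod_four_eq_three hp h4, ihdiv, hchi]
    ring

theorem rep_x2_y2_x1mod2_y0mod2 (n : ℕ) (hn : 0 < n) :
    ({p : ℤ × ℤ | p.1 ^ 2 + p.2 ^ 2 = (n : ℤ) ∧ p.1 % 2 = 1 ∧ p.2 % 2 = 0}.ncard : ℤ) =
      2 * Sdiv chiM4 n 1 - 2 * Sdiv chiM4 n 2 := by
  have hone : Sdiv chiM4 n 1 = ∑ d ∈ n.divisors, chiM4 d := by simp [Sdiv]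
  rw [hone]
  set T := {p : ℤ × ℤ | p.1 ^ 2 + p.2 ^ 2 = (n : ℤ) ∧ p.1 % 2 = 1 ∧ p.2 % 2 = 0} with hT
  have hparity : ∀ x y : ℤ, x ^ 2 + y ^ 2 = n → (x + y) % 2 = (n : ℤ) % 2 := by
    intro x y h
    rw [← h]
    rcases Int.emod_two_eq_zero_or_one x with hx | hx <;>
      rcases Int.emod_two_eq_zero_or_one y with hy | hy <;>
      simp [pow_two, Int.add_emod, Int.mul_emod, hx, hy]
  rcases Nat.mod_two_eq_zero_or_one n with h | h
  · have hempty : T = ∅ := by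
      rw [Set.eq_empty_iff_forall_notMem]
      rintro ⟨x, y⟩ ⟨hxy, hx, hy⟩
      have := hparity x y hxy
      simp only at hx hy
      omega
    obtain ⟨m, rfl⟩ := Nat.dvd_of_mod_eq_zero h
    rw [hempty, sum_divisors_chiM4_prime_mul Nat.prime_two (by omega), chiM4_two]
    simp [Sdiv]
  · have htwo : Sdiv chiM4 n 2 = 0 := if_neg (by omega)
    have hunion : T ∪ Prod.swap '' T = circlePoints n := by
      ext ⟨x, y⟩
      simp only [hT, circlePoints, Set.mem_union, Set.mem_ofPred_eq, Set.image_swap_eq_preimage_swap,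
        Set.mem_preimage, Prod.swap_prod_mk]
      constructor
      · rintro (⟨h, -⟩ | ⟨h, -⟩) <;> linarith
      · intro hxy
        have := hparity x y hxy
        rw [add_comm (y ^ 2)]
        simp only [hxy, true_and]
        omega
    have hdisj : Disjoint T (Prod.swap '' T) := by
      rw [Set.disjoint_left]
      rintro _ ⟨-, h1, -⟩ ⟨⟨x, y⟩, ⟨-, h2, h3⟩, rfl⟩
      simp only [Prod.fst_swap] at h1 h2 h3
      omega
    have hfin : T.Finite := (circlePoints_finite n).subset fun _ h => h.1
    have key := Set.ncard_union_eq hdisj hfin (hfin.image _)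
    rw [hunion, Set.ncard_image_of_injective _ Prod.swap_injective] at key
    have hcount := ncard_circlePoints_of_odd n h
    rw [key] at hcount
    push_cast at hcount
    linarith
end
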